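/- arXiv:2509.11888 — 2 statements merged into one kernel-verified Lean document; each statement's English description precedes it below -/
import Mathlib

section
/- Let (E, †, ⟨⟨·,·⟩⟩) be a †-bimodule over a ∗-algebra B admitting a finite frame {x_j}, i.e. x = Σ_j ⟨⟨x, x_j⟩⟩ x_j for all x ∈ E. Then the map H : Ē → {left B-linear maps E → B} defined by H(ē)(f) = ⟨⟨f, e⟩⟩ is a positive definite Hermitian metric on E. -/
open MulOpposite

noncomputable section

/-! ## STATEMENT 4: †-bimodules with a finite frame give positive definite
Hermitian metrics -/

/-!
Pairing the frame expansion `f = ∑ j, ⟨⟨f, e j⟩⟩ e j` with a left linear `φ` gives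
`φ f = ∑ j, ⟨⟨f, e j⟩⟩ φ (e j) = ⟨⟨f, ∑ j, φ (e j)∗ e j⟩⟩`, so `φ ↦ ∑ j, φ (e j)∗ e j` inverts `H`.
Applied to `φ = ⟨⟨·, f⟩⟩`, the same identity reads `⟨⟨f, f⟩⟩ = ∑ j, ⟨⟨f, e j⟩⟩ ⟨⟨f, e j⟩⟩∗`,
a sum of elements `b b∗`, hence nonnegative.
-/

section Frame

variable {B X ι : Type*} [Semiring B] [AddCommMonoid X] [Module B X] {H : X → Module.Dual B X}

/-- A finite frame for the pairing `⟨⟨x, y⟩⟩ = H y x`: every vector is recovered from its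
coefficients `⟨⟨x, e j⟩⟩`. -/
def IsFrame [Fintype ι] (H : X → Module.Dual B X) (e : ι → X) : Prop :=
  ∀ x, ∑ j, H (e j) x • e j = x

theorem IsFrame.map_eq_sum [Fintype ι] {e : ι → X} (he : IsFrame H e) (φ : Module.Dual B X)
    (x : X) : φ x = ∑ j, H (e j) x * φ (e j) := by
  conv_lhs => rw [← he x]
  simp only [map_sum, map_smul, smul_eq_mul]

variable [StarRing B]

/-- Conjugate symmetry of a `B`-valued pairing, given in curried form `H y x = ⟨⟨x, y⟩⟩` so that
left `B`-linearity in the first variable is carried by the type of `H`. -/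
def IsConjSymm (H : X → Module.Dual B X) : Prop :=
  ∀ x y, star (H x y) = H y x

theorem IsConjSymm.smul_apply (hH : IsConjSymm H) (b : B) (x y : X) :
    H (b • x) y = H x y * star b := by
  rw [← hH, map_smul, smul_eq_mul, star_mul, hH]

variable [Fintype ι] {e : ι → X}

/-- The vector that represents a left linear functional `φ` with respect to a frame `e`, as in the
Riesz representation theorem. -/
def rieszVector (e : ι → X) (φ : Module.Dual B X) : X :=
  ∑ j, star (φ (e j)) • e j

namespace IsFrame

theorem rieszVector_apply (he : IsFrame H e) (hH : IsConjSymm H) (x : X) :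
    rieszVector e (H x) = x := by
  simpa only [rieszVector, hH x] using he x

theorem injective (he : IsFrame H e) (hH : IsConjSymm H) : Function.Injective H :=
  Function.LeftInverse.injective (he.rieszVector_apply hH)

theorem apply_rieszVector (he : IsFrame H e) (hH : IsConjSymm H) (φ : Module.Dual B X) :
    H (rieszVector e φ) = φ := by
  ext x
  calc
    H (rieszVector e φ) x = star (H x (rieszVector e φ)) := (hH _ _).symm
    _ = star (∑ j, star (φ (e j)) * H x (e j)) := by
      simp only [rieszVector, map_sum, map_smul, smul_eq_mul]
    _ = ∑ j, H (e j) x * φ (e j) := by simp only [star_sum, star_mul, star_star, hH x]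
    _ = φ x := (he.map_eq_sum φ x).symm

theorem apply_self_nonneg [PartialOrder B] [StarOrderedRing B] (he : IsFrame H e)
    (hH : IsConjSymm H) (x : X) : 0 ≤ H x x := by
  have parseval : H x x = ∑ j, H (e j) x * star (H (e j) x) := by
    simpa only [hH _ x] using he.map_eq_sum (H x) x
  rw [parseval]
  exact Finset.sum_nonneg fun j _ ↦ mul_star_self_nonneg _

end IsFrame

end Frame

theorem statement4_general {R B X ι : Type*} [Semiring B] [StarRing B]
    [PartialOrder B] [StarOrderedRing B] [Star R] [SMul R B] [StarModule R B]
    [AddCommMonoid X] [Module B X] [SMul Bᵐᵒᵖ X] [SMul R X] [Fintype ι]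
    (hh : X → X → B)
    (hh_add_left : ∀ x y e, hh (x + y) e = hh x e + hh y e)
    (hh_left : ∀ (b : B) (x y : X), hh (b • x) y = b * hh x y)
    (hh_smul_left : ∀ (c : R) (x y : X), hh (c • x) y = c • hh x y)
    (hh_symm : ∀ x y, hh x y = star (hh y x))
    (hh_bal : ∀ (b : B) (x y : X), hh (op b • x) y = hh x (op (star b) • y))
    (hh_def : ∀ x : X, hh x x = 0 → x = 0)
    (xj : ι → X) (hframe : ∀ v : X, v = ∑ j, hh v (xj j) • xj j) :
    (∀ (b : B) (e f : X), hh (b • f) e = b * hh f e) ∧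
    (∀ (c : R) (e f : X), hh f (c • e) = star c • hh f e) ∧
    (∀ (b : B) (e f : X), hh f (b • e) = hh f e * star b) ∧
    (∀ (b : B) (e f : X), hh (op b • f) e = hh f (op (star b) • e)) ∧
    (∀ e f : X, star (hh e f) = hh f e) ∧
    (∀ x y : X, (∀ f, hh f x = hh f y) → x = y) ∧
    (∀ φ : X →ₗ[B] B, ∃ e : X, ∀ f, φ f = hh f e) ∧
    (∀ e : X, 0 ≤ hh e e ∧ (hh e e = 0 ↔ e = 0)) := by
  let H (y : X) : Module.Dual B X :=
    { toFun := fun x ↦ hh x y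
      map_add' := fun x x' ↦ hh_add_left x x' y
      map_smul' := fun b x ↦ hh_left b x y }
  have symm : IsConjSymm H := fun x y ↦ (hh_symm x y).symm
  have frame : IsFrame H xj := fun v ↦ (hframe v).symm
  have conj_smul (c : R) (e f : X) : hh f (c • e) = star c • hh f e := by
    rw [hh_symm, hh_smul_left, star_smul, ← hh_symm]
  have injective (x y : X) (h : ∀ f, hh f x = hh f y) : x = y :=
    frame.injective symm (LinearMap.ext h)
  have surjective (φ : X →ₗ[B] B) : ∃ e, ∀ f, φ f = hh f e :=
    ⟨rieszVector xj φ, fun f ↦ (LinearMap.congr_fun (frame.apply_rieszVector symm φ) f).symm⟩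
  have definite (e : X) : hh e e = 0 ↔ e = 0 :=
    ⟨hh_def e, fun h ↦ h ▸ map_zero (H 0)⟩
  exact ⟨fun b e f ↦ hh_left b f e, conj_smul, symm.smul_apply, fun b e f ↦ hh_bal b f e,
    fun e f ↦ (hh_symm f e).symm, injective, surjective,
    fun e ↦ ⟨frame.apply_self_nonneg symm e, definite e⟩⟩

/-- Let `(X, †, ⟨⟨·,·⟩⟩)` be a `†`-bimodule over a `∗`-algebra `B`
(so `X` is finitely generated projective as a left `B`-module, `†` is a `†`-structure and
`⟨⟨·,·⟩⟩` is a left `B`-valued inner product with `⟨⟨xb, y⟩⟩ = ⟨⟨x, yb∗⟩⟩`), admitting a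
finite frame `{x_j}`.  Then `H : Ē → {left B-linear maps X → B}`, `H(ē)(f) = ⟨⟨f,e⟩⟩`,
is a positive definite Hermitian metric on `X`. -/
theorem statement4 (B X : Type) [Ring B] [Algebra ℂ B] [StarRing B] [StarModule ℂ B]
    [PartialOrder B] [StarOrderedRing B]
    [AddCommGroup X] [Module ℂ X] [Module B X] [Module Bᵐᵒᵖ X]
    -- X is finitely generated and projective as a left B-module
    [Module.Finite B X] [Module.Projective B X]
    -- the †-structure on X
    (dag : X → X)
    (dag_add : ∀ x y, dag (x + y) = dag x + dag y)
    (dag_smul : ∀ (c : ℂ) (x : X), dag (c • x) = (starRingEnd ℂ c) • dag x)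
    (dag_invol : ∀ x, dag (dag x) = x)
    (dag_left : ∀ (b : B) (x : X), dag (b • x) = op (star b) • dag x)
    (dag_right : ∀ (b : B) (x : X), dag (op b • x) = star b • dag x)
    -- the inner product ⟨⟨·,·⟩⟩ : X × X → B
    (hh : X → X → B)
    (hh_add_left : ∀ x y e, hh (x + y) e = hh x e + hh y e)
    (hh_add_right : ∀ e x y, hh e (x + y) = hh e x + hh e y)
    (hh_left : ∀ (b : B) (x y : X), hh (b • x) y = b * hh x y)
    (hh_smul_left : ∀ (c : ℂ) (x y : X), hh (c • x) y = c • hh x y)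
    (hh_smul_right : ∀ (c : ℂ) (x y : X), hh x (c • y) = (starRingEnd ℂ c) • hh x y)
    (hh_symm : ∀ x y, hh x y = star (hh y x))
    (hh_bal : ∀ (b : B) (x y : X), hh (op b • x) y = hh x (op (star b) • y))
    (hh_pos : ∀ x : X, 0 ≤ hh x x)
    (hh_def : ∀ x : X, hh x x = 0 → x = 0)
    -- a finite frame {x_j} for X
    (k : ℕ) (xj : Fin k → X)
    (hframe : ∀ v : X, v = ∑ j, (hh v (xj j)) • xj j) :
    -- H(ē)(f) = ⟨⟨f,e⟩⟩ is a positive definite Hermitian metric on X: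
    -- each H(ē) is a left B-linear map X → B
    (∀ (b : B) (e f : X), hh (b • f) e = b * hh f e) ∧
    -- H is ℂ-linear from the conjugate module
    (∀ (c : ℂ) (e f : X), hh f (c • e) = (starRingEnd ℂ c) • hh f e) ∧
    -- H is a right B-module map
    (∀ (b : B) (e f : X), hh f (b • e) = hh f e * star b) ∧
    -- H is a left B-module map
    (∀ (b : B) (e f : X), hh (op b • f) e = hh f (op (star b) • e)) ∧
    -- the symmetry ⟨y, x̄⟩∗ = ⟨x, ȳ⟩
    (∀ e f : X, star (hh e f) = hh f e) ∧
    -- H is injective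
    (∀ x y : X, (∀ f, hh f x = hh f y) → x = y) ∧
    -- H is surjective onto the left B-linear maps X → B
    (∀ φ : X →ₗ[B] B, ∃ e : X, ∀ f, φ f = hh f e) ∧
    -- H is positive definite
    (∀ e : X, 0 ≤ hh e e ∧ (hh e e = 0 ↔ e = 0)) :=
  statement4_general hh hh_add_left hh_left hh_smul_left hh_symm hh_bal hh_def xj hframe

end
end

section
/- Let π : A → H be a surjective homomorphism of Hopf algebras, B = A^{co(H)} the coinvariant subalgebra, and assume B is a quantum homogeneous space (A is faithfully flat as a right B-module) and H is cosemisimple. If (Ω•, ∧, d) is an A-covariant differential calculus on B such that each Ω^k belongs to the category ^A_0Mod_B (objects of the relative Hopf module category that are finitely generated as left B-modules and satisfy Ω^k B⁺ = B⁺ Ω^k), then (Ω•, ∧, d) is covariantly quasi-tame: there exists a morphism s : Ω² → Ω¹ ⊗_B Ω¹ in the category of relative Hopf modules (A-covariant and B-bilinear) with ∧ ∘ s = id_{Ω²}. -/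
open MulOpposite TensorProduct

noncomputable section

/-! ## Generic noncommutative differential geometry preliminaries

We encode a `B`-bimodule as a `ℂ`-module with a left `B`-action and a right `B`-action
(encoded as a left `Bᵐᵒᵖ`-action).  The balanced tensor product `M ⊗_B N` is encoded by
a type `T` together with a "balanced pairing" `tp` whose image spans `T`. -/

/-- Data realizing `T` as the balanced tensor product `M ⊗_B N` over the
(possibly noncommutative) `ℂ`-algebra `B`: a `ℂ`-bilinear pairing which is left
`B`-linear in the first variable, right `B`-linear in the second variable,
`B`-balanced in the middle, and whose image spans `T`. -/
structure BalPair (B : Type) [Ring B] [Algebra ℂ B]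
    (M N T : Type) [AddCommGroup M] [Module ℂ M] [Module B M] [Module Bᵐᵒᵖ M]
    [AddCommGroup N] [Module ℂ N] [Module B N] [Module Bᵐᵒᵖ N]
    [AddCommGroup T] [Module ℂ T] [Module B T] [Module Bᵐᵒᵖ T] : Type where
  tp : M →ₗ[ℂ] N →ₗ[ℂ] T
  tp_left : ∀ (b : B) (m : M) (n : N), tp (b • m) n = b • tp m n
  tp_right : ∀ (b : B) (m : M) (n : N), tp m (op b • n) = op b • tp m n
  tp_mid : ∀ (b : B) (m : M) (n : N), tp (op b • m) n = tp m (b • n)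
  tp_span : Submodule.span ℂ {t : T | ∃ m n, t = tp m n} = ⊤

/-- A first order differential calculus `(Ω¹, d)` over `B`:  `d : B → Ω¹` is a
derivation whose image generates `Ω¹` as a `B`-bimodule. -/
structure FODC (B : Type) [Ring B] [Algebra ℂ B]
    (Ω : Type) [AddCommGroup Ω] [Module ℂ Ω] [Module B Ω] [Module Bᵐᵒᵖ Ω] : Type where
  d : B →ₗ[ℂ] Ω
  leibniz : ∀ a b : B, d (a * b) = a • d b + op b • d a
  generates : Submodule.span ℂ {x : Ω | ∃ a b : B, x = a • d b} = ⊤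

section Connections

variable {B : Type} [Ring B] [Algebra ℂ B]
variable {Ω E TE T : Type}
  [AddCommGroup Ω] [Module ℂ Ω] [Module B Ω] [Module Bᵐᵒᵖ Ω]
  [AddCommGroup E] [Module ℂ E] [Module B E] [Module Bᵐᵒᵖ E]
  [AddCommGroup TE] [Module ℂ TE] [Module B TE] [Module Bᵐᵒᵖ TE]
  [AddCommGroup T] [Module ℂ T] [Module B T] [Module Bᵐᵒᵖ T]

/-- `∇ : E → Ω¹ ⊗_B E` is a left connection: `∇(be) = b∇e + db ⊗ e`. -/
def IsConnection (P : BalPair B Ω E TE) (d : B →ₗ[ℂ] Ω) (cn : E →ₗ[ℂ] TE) : Prop :=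
  ∀ (b : B) (e : E), cn (b • e) = b • cn e + P.tp (d b) e

/-- A `B`-bimodule map. -/
def IsBimoduleMap {M N : Type} [AddCommGroup M] [Module ℂ M] [Module B M] [Module Bᵐᵒᵖ M]
    [AddCommGroup N] [Module ℂ N] [Module B N] [Module Bᵐᵒᵖ N] (σ : M →ₗ[ℂ] N) : Prop :=
  (∀ (b : B) (t : M), σ (b • t) = b • σ t) ∧ ∀ (b : B) (t : M), σ (op b • t) = op b • σ t

/-- The right Leibniz rule for a bimodule connection `(∇, σ)`:
`∇(eb) = (∇e)b + σ(e ⊗ db)`. -/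
def IsRightConnection (Q : BalPair B E Ω TE)
    (d : B →ₗ[ℂ] Ω) (cn : E →ₗ[ℂ] TE) (σ : TE →ₗ[ℂ] TE) : Prop :=
  ∀ (b : B) (e : E), cn (op b • e) = op b • cn e + σ (Q.tp e (d b))

end Connections

section Star

variable (B : Type) [Ring B] [Algebra ℂ B] [StarRing B]
variable (Ω : Type) [AddCommGroup Ω] [Module ℂ Ω] [Module B Ω] [Module Bᵐᵒᵖ Ω]

/-- A `∗`-structure on the bimodule `Ω` over the `∗`-algebra `B`:
an antilinear involution with `(bωc)∗ = c∗ω∗b∗`. -/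
structure StarData : Type where
  st : Ω → Ω
  st_add : ∀ x y, st (x + y) = st x + st y
  st_smul : ∀ (c : ℂ) (x : Ω), st (c • x) = (starRingEnd ℂ c) • st x
  st_invol : ∀ x, st (st x) = x
  st_left : ∀ (b : B) (x : Ω), st (b • x) = op (star b) • st x
  st_right : ∀ (b : B) (x : Ω), st (op b • x) = star b • st x

end Star

section StarNotions

variable {B : Type} [Ring B] [Algebra ℂ B] [StarRing B]
variable {Ω E TE T : Type}
  [AddCommGroup Ω] [Module ℂ Ω] [Module B Ω] [Module Bᵐᵒᵖ Ω]
  [AddCommGroup E] [Module ℂ E] [Module B E] [Module Bᵐᵒᵖ E]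
  [AddCommGroup TE] [Module ℂ TE] [Module B TE] [Module Bᵐᵒᵖ TE]
  [AddCommGroup T] [Module ℂ T] [Module B T] [Module Bᵐᵒᵖ T]

/-- A metric `g = Σᵢ ωᵢ ⊗ ηᵢ` is real if `g = Σᵢ ηᵢ∗ ⊗ ωᵢ∗`
(stated for every representation of `g` as a sum of simple tensors). -/
def IsRealMetric (P : BalPair B Ω Ω T) (S : StarData B Ω) (g : T) : Prop :=
  ∀ (n : ℕ) (α β : Fin n → Ω), g = ∑ i, P.tp (α i) (β i) →
    g = ∑ i, P.tp (S.st (β i)) (S.st (α i))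

/-- The Beggs–Majid `∗`-preserving condition
`σ̄ ∘ Υ⁻¹ ∘ (⋆ ⊗ ⋆) ∘ ∇ = ∇̄ ∘ ⋆` for a bimodule connection `(∇, σ)` on `Ω¹`,
written out on representations `∇ω = Σᵢ αᵢ ⊗ βᵢ`:  `∇(ω∗) = Σᵢ σ(βᵢ∗ ⊗ αᵢ∗)`. -/
def IsStarPreserving (P : BalPair B Ω Ω T) (S : StarData B Ω)
    (cn : Ω →ₗ[ℂ] T) (σ : T →ₗ[ℂ] T) : Prop :=
  ∀ (ω : Ω) (n : ℕ) (α β : Fin n → Ω), cn ω = ∑ i, P.tp (α i) (β i) →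
    cn (S.st ω) = ∑ i, σ (P.tp (S.st (β i)) (S.st (α i)))

/-- Compatibility of a connection `∇` on `E` with an Hermitian metric (with associated
sesquilinear pairing `h`), in the sense of Beggs–Majid:
`d⟨·,·⟩ = (id ⊗ ⟨·,·⟩)(∇ ⊗ id) + (⟨·,·⟩ ⊗ id)(id ⊗ ∇̃)`, written out on
representations `∇e = Σᵢ αᵢ ⊗ xᵢ`, `∇f = Σⱼ βⱼ ⊗ yⱼ`. -/
def IsHermCompatible (P : BalPair B Ω E TE) (d : B →ₗ[ℂ] Ω) (S : StarData B Ω)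
    (h : E → E → B) (cn : E →ₗ[ℂ] TE) : Prop :=
  ∀ (e f : E) (n m : ℕ) (α : Fin n → Ω) (x : Fin n → E) (β : Fin m → Ω) (y : Fin m → E),
    cn e = ∑ i, P.tp (α i) (x i) → cn f = ∑ j, P.tp (β j) (y j) →
    d (h e f) = (∑ i, op (h (x i) f) • α i) + ∑ j, h e (y j) • S.st (β j)

/-- A connection `∇'` on `E` for the calculus `(Ω¹, d')` with †-structure `dag` is
Hermitian with respect to the sesquilinear form `h` (Mesland–Rennie):
`d'⟨⟨e,f⟩⟩ = ⟨⟨∇'e, f⟩⟩ − ⟨⟨e, ∇'f⟩⟩`, written out on representations. -/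
def IsHermitianConnection (P : BalPair B Ω E TE) (d' : B →ₗ[ℂ] Ω) (dag : Ω → Ω)
    (h : E → E → B) (cn' : E →ₗ[ℂ] TE) : Prop :=
  ∀ (e f : E) (n m : ℕ) (α : Fin n → Ω) (x : Fin n → E) (β : Fin m → Ω) (y : Fin m → E),
    cn' e = ∑ i, P.tp (α i) (x i) → cn' f = ∑ j, P.tp (β j) (y j) →
    d' (h e f) = (∑ i, op (h (x i) f) • α i) - ∑ j, h e (y j) • dag (β j)

end StarNotions

section Junk

variable {B : Type} [Ring B] [Algebra ℂ B]
variable {Ω T : Type}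
  [AddCommGroup Ω] [Module ℂ Ω] [Module B Ω] [Module Bᵐᵒᵖ Ω]
  [AddCommGroup T] [Module ℂ T] [Module B T] [Module Bᵐᵒᵖ T]

/-- The junk 2-tensors `JT²_d = { π̂(δω) : ω ∈ Ω¹_u ∩ Ker π̂ }` of a first order calculus,
realized concretely inside `T = Ω¹ ⊗_B Ω¹`. -/
def junkTwoTensors (P : BalPair B Ω Ω T) (D : FODC B Ω) : Set T :=
  {t | ∃ (n : ℕ) (a b : Fin n → B), (∑ i, a i * b i = 0) ∧ (∑ i, a i • D.d (b i) = 0) ∧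
    t = ∑ i, P.tp (D.d (a i)) (D.d (b i))}

/-- Torsion-freeness in the sense of Mesland–Rennie for a weak second order
differential structure `(Ω¹, d, ψ)`: `(1 − ψ)∇ = d_ψ`, where
`d_ψ(Σᵢ aᵢ dbᵢ) = (1 − ψ)(Σᵢ daᵢ ⊗ dbᵢ)` (well defined since `JT²_d ⊆ Ran ψ`). -/
def IsTorsionFreeMR (P : BalPair B Ω Ω T) (d : B →ₗ[ℂ] Ω) (ψ : T →ₗ[ℂ] T)
    (cn : Ω →ₗ[ℂ] T) : Prop :=
  ∀ (n : ℕ) (a b : Fin n → B),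
    cn (∑ i, a i • d (b i)) - ψ (cn (∑ i, a i • d (b i))) =
      (∑ i, P.tp (d (a i)) (d (b i))) - ψ (∑ i, P.tp (d (a i)) (d (b i)))

end Junk


/-! ### Hopf-algebraic preliminaries -/


/-! ## Hopf-algebraic preliminaries: coactions, relative Hopf modules,
faithful flatness, cosemisimplicity -/

/-- A left coaction of the bialgebra `A` on a `ℂ`-module `M`. -/
structure Coaction (A : Type) [Ring A] [Bialgebra ℂ A]
    (M : Type) [AddCommGroup M] [Module ℂ M] : Type where
  ρ : M →ₗ[ℂ] A ⊗[ℂ] M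
  coassoc : ∀ m : M, (LinearMap.rTensor M (Coalgebra.comul (R := ℂ) (A := A))) (ρ m) =
    (TensorProduct.assoc ℂ A A M).symm ((LinearMap.lTensor A ρ) (ρ m))
  counit : ∀ m : M,
    (TensorProduct.lid ℂ M) ((LinearMap.rTensor M (Coalgebra.counit (R := ℂ) (A := A))) (ρ m)) = m

section Coactions

variable {A : Type} [Ring A] [Bialgebra ℂ A]

/-- An `A`-covariant (`ℂ`-linear) map between `A`-comodules. -/
def IsCovariant {M N : Type} [AddCommGroup M] [Module ℂ M] [AddCommGroup N] [Module ℂ N]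
    (cM : Coaction A M) (cN : Coaction A N) (f : M →ₗ[ℂ] N) : Prop :=
  ∀ m : M, cN.ρ (f m) = LinearMap.lTensor A f (cM.ρ m)

/-- An element `m` is coinvariant if `ρ(m) = 1 ⊗ m`. -/
def IsCoinvariant {M : Type} [AddCommGroup M] [Module ℂ M]
    (cM : Coaction A M) (m : M) : Prop :=
  cM.ρ m = (1 : A) ⊗ₜ m

/-- The coaction of `A` on a comodule algebra `B` is an algebra map. -/
def IsComoduleAlgebra {B : Type} [Ring B] [Algebra ℂ B] (cB : Coaction A B) : Prop :=
  cB.ρ 1 = 1 ∧ ∀ b b' : B, cB.ρ (b * b') = cB.ρ b * cB.ρ b'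

/-- `M` is a relative Hopf module over the comodule algebra `B`:
`δ_M(bmb') = δ_B(b) δ_M(m) δ_B(b')`, written out on representations
`δ_B(b) = Σᵢ aᵢ ⊗ cᵢ` of the coaction of `B`. -/
def IsRelHopfModule {B M : Type} [Ring B] [Algebra ℂ B]
    [AddCommGroup M] [Module ℂ M] [Module B M] [Module Bᵐᵒᵖ M]
    [SMulCommClass B ℂ M] [SMulCommClass Bᵐᵒᵖ ℂ M]
    (cB : Coaction A B) (cM : Coaction A M) : Prop :=
  (∀ (b : B) (m : M) (n : ℕ) (a : Fin n → A) (c : Fin n → B),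
    cB.ρ b = ∑ i, a i ⊗ₜ c i →
    cM.ρ (b • m) = ∑ i, (TensorProduct.map (LinearMap.mulLeft ℂ (a i))
      (DistribMulAction.toLinearMap ℂ M (c i))) (cM.ρ m)) ∧
  (∀ (b : B) (m : M) (n : ℕ) (a : Fin n → A) (c : Fin n → B),
    cB.ρ b = ∑ i, a i ⊗ₜ c i →
    cM.ρ (op b • m) = ∑ i, (TensorProduct.map (LinearMap.mulRight ℂ (a i))
      (DistribMulAction.toLinearMap ℂ M (op (c i)))) (cM.ρ m))

end Coactions

section FaithfulFlat

variable (B : Type) [Ring B] [Algebra ℂ B]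
variable (A : Type) [AddCommGroup A] [Module ℂ A] [Module Bᵐᵒᵖ A]

/-- The relator submodule of `A ⊗[ℂ] M` defining the balanced tensor product `A ⊗_B M`
of the right `B`-module `A` with a left `B`-module `M`. -/
def balRel (M : Type) [AddCommGroup M] [Module ℂ M] [Module B M] :
    Submodule ℂ (A ⊗[ℂ] M) :=
  Submodule.span ℂ {x | ∃ (a : A) (b : B) (m : M), x = (op b • a) ⊗ₜ m - a ⊗ₜ (b • m)}

/-- The balanced tensor product `A ⊗_B M`. -/
def BalTensor (M : Type) [AddCommGroup M] [Module ℂ M] [Module B M] : Type :=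
  (A ⊗[ℂ] M) ⧸ balRel B A M

instance (M : Type) [AddCommGroup M] [Module ℂ M] [Module B M] :
    AddCommGroup (BalTensor B A M) :=
  inferInstanceAs (AddCommGroup ((A ⊗[ℂ] M) ⧸ balRel B A M))

instance (M : Type) [AddCommGroup M] [Module ℂ M] [Module B M] :
    Module ℂ (BalTensor B A M) :=
  inferInstanceAs (Module ℂ ((A ⊗[ℂ] M) ⧸ balRel B A M))

/-- A left `B`-linear map between `ℂ`-compatible `B`-modules is `ℂ`-linear. -/
def toCLinear {M N : Type} [AddCommGroup M] [Module ℂ M] [Module B M] [IsScalarTower ℂ B M]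
    [AddCommGroup N] [Module ℂ N] [Module B N] [IsScalarTower ℂ B N] (f : M →ₗ[B] N) :
    M →ₗ[ℂ] N where
  toFun := f
  map_add' := f.map_add
  map_smul' := fun c m => by
    simp only [RingHom.id_apply]
    rw [← algebraMap_smul B c m, map_smul, algebraMap_smul]

/-- The induced map `id_A ⊗ f : A ⊗_B M → A ⊗_B N` of a left `B`-linear map. -/
def balMap {M N : Type} [AddCommGroup M] [Module ℂ M] [Module B M] [IsScalarTower ℂ B M]
    [AddCommGroup N] [Module ℂ N] [Module B N] [IsScalarTower ℂ B N] (f : M →ₗ[B] N) :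
    BalTensor B A M →ₗ[ℂ] BalTensor B A N :=
  Submodule.mapQ _ _ (LinearMap.lTensor A (toCLinear B f))
    (by
      refine Submodule.span_le.mpr ?_
      rintro x ⟨a, b, m, rfl⟩
      simp only [SetLike.mem_coe, Submodule.mem_comap, map_sub, LinearMap.lTensor_tmul]
      have h1 : (toCLinear B f) (b • m) = b • (toCLinear B f) m := f.map_smul b m
      rw [h1]
      exact Submodule.subset_span ⟨a, b, (toCLinear B f) m, rfl⟩)

/-- `A` is faithfully flat as a right `B`-module: the functor `A ⊗_B −` preserves
injectivity and reflects triviality. -/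
def RightFaithfullyFlat : Prop :=
  (∀ (M N : Type) [AddCommGroup M] [Module ℂ M] [Module B M] [IsScalarTower ℂ B M]
    [AddCommGroup N] [Module ℂ N] [Module B N] [IsScalarTower ℂ B N]
    (f : M →ₗ[B] N), Function.Injective f → Function.Injective (balMap B A f)) ∧
  (∀ (M : Type) [AddCommGroup M] [Module ℂ M] [Module B M] [IsScalarTower ℂ B M],
    Subsingleton (BalTensor B A M) → Subsingleton M)

end FaithfulFlat

/-- A bialgebra is cosemisimple iff it admits a (bi-)invariant integral. -/
def IsCosemisimple (H : Type) [Ring H] [Bialgebra ℂ H] : Prop :=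
  ∃ h : H →ₗ[ℂ] ℂ, h 1 = 1 ∧
    (∀ x : H, (TensorProduct.rid ℂ H)
      (LinearMap.lTensor H h (Coalgebra.comul (R := ℂ) x)) = h x • 1) ∧
    (∀ x : H, (TensorProduct.lid ℂ H)
      (LinearMap.rTensor H h (Coalgebra.comul (R := ℂ) x)) = h x • 1)

/-! For a relative Hopf module `N` the map `n ↦ n₋₁ ⊗ [n₀]` embeds `N` in `A ⊗ N/B⁺N` (Takeuchi).
Averaging `A` over `H` with the normalised invariant integral gives a unital, `A`-covariant and
`B`-bilinear projection `E : A → B`. For every relative Hopf module `M` the map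
`a ⊗ m ↦ E(a S(m₋₁)) m₀` is then a covariant retraction of the coaction `M → A ⊗ M`, it is natural
in `M`, and it factors through `A ⊗ M/B⁺M`. Hence a merely linear section of
`T/B⁺T → Ω²/B⁺Ω²`, where `T = Ω¹ ⊗_B Ω¹`, averages to a covariant section `Ω² → T`; it is right
`B`-linear because `B⁺` acts on `T` from the right through `TB⁺ ⊆ B⁺T`. -/

section CofreeCoaction

lemma assoc_rTensor_comul_tmul {R C V : Type*} [CommRing R] [AddCommGroup C] [Module R C]
    [Coalgebra R C] [AddCommGroup V] [Module R V] (c : C) (v : V) :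
    TensorProduct.assoc R C C V (LinearMap.rTensor V Coalgebra.comul (c ⊗ₜ v)) =
      LinearMap.lTensor C ((TensorProduct.mk R C V).flip v) (Coalgebra.comul c) := by
  rw [LinearMap.rTensor_tmul]
  induction Coalgebra.comul (R := R) c with
  | zero => simp only [map_zero, TensorProduct.zero_tmul]
  | add X Y hX hY => simp only [map_add, TensorProduct.add_tmul, hX, hY]
  | tmul x y => rfl

variable {A : Type} [Ring A] [Bialgebra ℂ A]

variable (A) in
/-- The left regular coaction of a bialgebra on itself, given by the coproduct. -/
def Coaction.regular : Coaction A A where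
  ρ := Coalgebra.comul
  coassoc a := by rw [LinearEquiv.eq_symm_apply, Coalgebra.coassoc_apply]
  counit a := by rw [Coalgebra.rTensor_counit_comul, TensorProduct.lid_tmul, one_smul]

variable (A) in
/-- The cofree coaction on `A ⊗ V`, given by the coproduct of the first factor. For
`V = M / B⁺M` this is the comodule in which Takeuchi's equivalence embeds a relative Hopf
module `M`. -/
def Coaction.cofree (V : Type) [AddCommGroup V] [Module ℂ V] : Coaction A (A ⊗[ℂ] V) where
  ρ := (TensorProduct.assoc ℂ A A V).toLinearMap ∘ₗ LinearMap.rTensor V Coalgebra.comul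
  coassoc X := by
    induction X with
    | zero => simp only [map_zero]
    | add X Y hX hY => simp only [map_add, hX, hY]
    | tmul a v =>
      have hρ : ((TensorProduct.assoc ℂ A A V).toLinearMap ∘ₗ
          LinearMap.rTensor V Coalgebra.comul) ∘ₗ (TensorProduct.mk ℂ A V).flip v =
            LinearMap.lTensor A ((TensorProduct.mk ℂ A V).flip v) ∘ₗ Coalgebra.comul :=
        LinearMap.ext fun x => assoc_rTensor_comul_tmul x v
      rw [LinearMap.comp_apply, LinearEquiv.coe_coe, assoc_rTensor_comul_tmul,
        ← LinearMap.lTensor_comp_apply, hρ, ← LinearMap.comp_apply,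
        LinearMap.rTensor_comp_lTensor, ← LinearMap.lTensor_comp_rTensor, LinearMap.lTensor_tensor]
      simp only [LinearMap.comp_apply, LinearEquiv.coe_coe, Coalgebra.coassoc_apply,
        LinearMap.lTensor_comp_apply]
  counit X := by
    induction X with
    | zero => simp only [map_zero]
    | add X Y hX hY => simp only [map_add, hX, hY]
    | tmul a v =>
      rw [LinearMap.comp_apply, LinearEquiv.coe_coe, assoc_rTensor_comul_tmul,
        ← LinearMap.comp_apply, LinearMap.rTensor_comp_lTensor, ← LinearMap.lTensor_comp_rTensor,
        LinearMap.comp_apply, Coalgebra.rTensor_counit_comul, LinearMap.lTensor_tmul,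
        TensorProduct.lid_tmul, one_smul]
      rfl

variable {M N P : Type} [AddCommGroup M] [Module ℂ M] [AddCommGroup N] [Module ℂ N]
  [AddCommGroup P] [Module ℂ P] {cM : Coaction A M} {cN : Coaction A N} {cP : Coaction A P}

lemma IsCovariant.comp {g : N →ₗ[ℂ] P} {f : M →ₗ[ℂ] N} (hg : IsCovariant cN cP g)
    (hf : IsCovariant cM cN f) : IsCovariant cM cP (g ∘ₗ f) := fun m => by
  rw [LinearMap.comp_apply, hg, hf, LinearMap.lTensor_comp_apply]

lemma Coaction.isCovariant_cofree (cM : Coaction A M) :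
    IsCovariant cM (Coaction.cofree A M) cM.ρ := fun m =>
  (LinearEquiv.eq_symm_apply _).1 (cM.coassoc m)

lemma isCovariant_lTensor_cofree (f : M →ₗ[ℂ] N) :
    IsCovariant (Coaction.cofree A M) (Coaction.cofree A N) (LinearMap.lTensor A f) := fun X => by
  induction X with
  | zero => simp only [map_zero]
  | add X Y hX hY => simp only [map_add, hX, hY]
  | tmul a m =>
    simp only [Coaction.cofree, LinearMap.comp_apply, LinearEquiv.coe_coe,
      assoc_rTensor_comul_tmul, LinearMap.lTensor_tmul, ← LinearMap.lTensor_comp_apply]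
    rfl

end CofreeCoaction

section Expectation

open Coalgebra

variable {R : Type*} [CommRing R]

/-- The slice map `id ⊗ h : M ⊗ N → M` of a functional `h` on `N`. -/
def slice {N : Type*} [AddCommGroup N] [Module R N] (M : Type*) [AddCommGroup M] [Module R M]
    (h : N →ₗ[R] R) : M ⊗[R] N →ₗ[R] M :=
  (TensorProduct.rid R M).toLinearMap ∘ₗ LinearMap.lTensor M h

section Slice

variable {M M' N : Type*} [AddCommGroup M] [Module R M] [AddCommGroup M'] [Module R M']
  [AddCommGroup N] [Module R N] (h : N →ₗ[R] R)

@[simp]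
lemma slice_tmul (m : M) (n : N) : slice M h (m ⊗ₜ n) = h n • m := by
  simp only [slice, LinearMap.comp_apply, LinearMap.lTensor_tmul, LinearEquiv.coe_coe,
    TensorProduct.rid_tmul]

lemma map_slice (f : M →ₗ[R] M') (X : M ⊗[R] N) :
    f (slice M h X) = slice M' h (LinearMap.rTensor N f X) := by
  suffices f ∘ₗ slice M h = slice M' h ∘ₗ LinearMap.rTensor N f from LinearMap.congr_fun this X
  ext
  simp

lemma slice_tensor (X : (M ⊗[R] M') ⊗[R] N) :
    slice (M ⊗[R] M') h X =
      LinearMap.lTensor M (slice M' h) (TensorProduct.assoc R M M' N X) := by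
  suffices slice (M ⊗[R] M') h =
      LinearMap.lTensor M (slice M' h) ∘ₗ (TensorProduct.assoc R M M' N).toLinearMap from
    LinearMap.congr_fun this X
  ext
  simp

end Slice

section SliceAlgebra

variable {A H : Type*} [Ring A] [Algebra R A] [Ring H] [Algebra R H]

lemma slice_tmul_one_mul (h : H →ₗ[R] R) (a : A) (X : A ⊗[R] H) :
    slice A h (a ⊗ₜ 1 * X) = a * slice A h X := by
  induction X with
  | zero => simp only [mul_zero, map_zero]
  | add X Y hX hY => simp only [mul_add, map_add, hX, hY]
  | tmul x y => simp

lemma slice_mul_tmul_one (h : H →ₗ[R] R) (a : A) (X : A ⊗[R] H) :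
    slice A h (X * a ⊗ₜ 1) = slice A h X * a := by
  induction X with
  | zero => simp only [zero_mul, map_zero]
  | add X Y hX hY => simp only [add_mul, map_add, hX, hY]
  | tmul x y => simp

end SliceAlgebra

variable {A : Type*} [Ring A] [Bialgebra R A] {H : Type*} [Ring H] [Bialgebra R H]

/-- The right coaction `a ↦ a₁ ⊗ π(a₂)` of `H` on `A` induced by a bialgebra map `π : A → H`. -/
def rightCoaction (π : A →ₐc[R] H) : A →ₐ[R] A ⊗[R] H :=
  (Algebra.TensorProduct.map (AlgHom.id R A) (π : A →ₐ[R] H)).comp (Bialgebra.comulAlgHom R A)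

/-- The operator `a ↦ a₁ h(π(a₂))` averaging `A` over the quantum subgroup `π : A → H` by means
of a functional `h` on `H`. -/
def fibreIntegral (π : A →ₐc[R] H) (h : H →ₗ[R] R) : A →ₗ[R] A :=
  slice A h ∘ₗ (rightCoaction π).toLinearMap

variable {π : A →ₐc[R] H} {h : H →ₗ[R] R}

lemma fibreIntegral_one (h_one : h 1 = 1) : fibreIntegral π h 1 = 1 := by
  simp [fibreIntegral, h_one, Algebra.TensorProduct.one_def]

lemma fibreIntegral_mul_left {x : A} (hx : rightCoaction π x = x ⊗ₜ 1) (a : A) :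
    fibreIntegral π h (x * a) = x * fibreIntegral π h a := by
  simp only [fibreIntegral, LinearMap.comp_apply, AlgHom.toLinearMap_apply, map_mul, hx,
    slice_tmul_one_mul]

lemma fibreIntegral_mul_right {x : A} (hx : rightCoaction π x = x ⊗ₜ 1) (a : A) :
    fibreIntegral π h (a * x) = fibreIntegral π h a * x := by
  simp only [fibreIntegral, LinearMap.comp_apply, AlgHom.toLinearMap_apply, map_mul, hx,
    slice_mul_tmul_one]

lemma comul_fibreIntegral (a : A) :
    comul (fibreIntegral π h a) = LinearMap.lTensor A (fibreIntegral π h) (comul (R := R) a) := by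
  have hnat : TensorProduct.assoc R A A H
      (LinearMap.rTensor H comul (LinearMap.lTensor A π.toLinearMap (comul (R := R) a))) =
      LinearMap.lTensor A (rightCoaction π).toLinearMap (comul a) := by
    rw [← LinearMap.comp_apply, LinearMap.rTensor_comp_lTensor, ← LinearMap.lTensor_comp_rTensor,
      LinearMap.lTensor_tensor]
    simp only [LinearMap.comp_apply, LinearEquiv.coe_coe, LinearEquiv.apply_symm_apply,
      coassoc_apply, ← LinearMap.lTensor_comp_apply]
    rfl
  change comul (slice A h (LinearMap.lTensor A π.toLinearMap (comul a))) = _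
  rw [map_slice, slice_tensor, hnat, ← LinearMap.lTensor_comp_apply, fibreIntegral]

lemma map_fibreIntegral (h_inv : ∀ x, slice H h (comul x) = h x • 1) (a : A) :
    π (fibreIntegral π h a) = h (π a) • 1 := by
  have hπ : LinearMap.rTensor H π.toLinearMap (LinearMap.lTensor A π.toLinearMap (comul a)) =
      comul (R := R) (π a) := by
    rw [← LinearMap.comp_apply, LinearMap.rTensor_comp_lTensor]
    exact CoalgHomClass.map_comp_comul_apply π a
  change π.toLinearMap (slice A h (LinearMap.lTensor A π.toLinearMap (comul a))) = _
  rw [map_slice, hπ, h_inv]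

lemma rightCoaction_fibreIntegral (h_inv : ∀ x, slice H h (comul x) = h x • 1) (a : A) :
    rightCoaction π (fibreIntegral π h a) = fibreIntegral π h a ⊗ₜ 1 := by
  have hπ : π.toLinearMap ∘ₗ fibreIntegral π h =
      LinearMap.toSpanSingleton R H 1 ∘ₗ h ∘ₗ π.toLinearMap :=
    LinearMap.ext (map_fibreIntegral h_inv)
  have hslice (X : A ⊗[R] H) :
      LinearMap.lTensor A (LinearMap.toSpanSingleton R H 1 ∘ₗ h) X = slice A h X ⊗ₜ 1 := by
    induction X with
    | zero => simp only [map_zero, TensorProduct.zero_tmul]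
    | add X Y hX hY => simp only [map_add, TensorProduct.add_tmul, hX, hY]
    | tmul x y => simp [TensorProduct.smul_tmul]
  change LinearMap.lTensor A π.toLinearMap (comul (fibreIntegral π h a)) = _
  rw [comul_fibreIntegral, ← LinearMap.lTensor_comp_apply, hπ, ← LinearMap.comp_assoc,
    LinearMap.lTensor_comp_apply, hslice]
  rfl

end Expectation

section CovariantExpectation

variable {A B : Type} [Ring A] [Bialgebra ℂ A] [Ring B] [Algebra ℂ B]

/-- `E` is a unital, `B`-bilinear and `A`-covariant projection of `A` onto `B`, where `B` is
embedded in `A` by `ι`. -/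
structure IsCovariantExpectation (ι : B →ₐ[ℂ] A) (δB : Coaction A B) (E : A →ₗ[ℂ] B) : Prop where
  map_one : E 1 = 1
  map_mul_left : ∀ b a, E (ι b * a) = b * E a
  map_mul_right : ∀ a b, E (a * ι b) = E a * b
  covariant : IsCovariant (Coaction.regular A) δB E

theorem exists_isCovariantExpectation {H : Type*} [Ring H] [Bialgebra ℂ H] {π : A →ₐc[ℂ] H}
    {ι : B →ₐ[ℂ] A} (hι : Function.Injective ι)
    (hcoinv : ∀ a, a ∈ Set.range ι ↔ rightCoaction π a = a ⊗ₜ 1)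
    {δB : Coaction A B} (hδB : IsCovariant δB (Coaction.regular A) ι.toLinearMap)
    {h : H →ₗ[ℂ] ℂ} (h_one : h 1 = 1) (h_inv : ∀ x, slice H h (Coalgebra.comul x) = h x • 1) :
    ∃ E, IsCovariantExpectation ι δB E := by
  have hmem (a : A) : fibreIntegral π h a ∈ LinearMap.range ι.toLinearMap :=
    (hcoinv _).2 (rightCoaction_fibreIntegral h_inv a)
  have hB (b : B) : rightCoaction π (ι b) = ι b ⊗ₜ 1 := (hcoinv _).1 ⟨b, rfl⟩
  let E : A →ₗ[ℂ] B := (fibreIntegral π h).codRestrictOfInjective ι.toLinearMap hι hmem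
  have hιE : ι.toLinearMap ∘ₗ E = fibreIntegral π h := LinearMap.codRestrictOfInjective_comp ..
  have hE (a : A) : ι (E a) = fibreIntegral π h a := LinearMap.congr_fun hιE a
  refine ⟨E, ⟨hι ?_, fun b a => hι ?_, fun a b => hι ?_, fun a => ?_⟩⟩
  · rw [hE, fibreIntegral_one h_one, map_one]
  · rw [hE, fibreIntegral_mul_left (hB b), map_mul, hE]
  · rw [hE, fibreIntegral_mul_right (hB b), map_mul, hE]
  · refine Module.Flat.lTensor_preserves_injective_linearMap (M := A) ι.toLinearMap hι ?_
    rw [← hδB, ← LinearMap.lTensor_comp_apply, hιE]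
    exact (congrArg Coalgebra.comul (hE a)).trans (comul_fibreIntegral a)

end CovariantExpectation

section TensorActions

variable {R : Type*} [CommRing R] (A : Type*) [Ring A] [Algebra R A] (B : Type*) [Ring B]
  [Algebra R B] (M : Type*) [AddCommGroup M] [Module R M]

/-- The action `(a ⊗ b) • (x ⊗ m) = a x ⊗ b m` of `A ⊗ B` on `A ⊗ M`, for a left `B`-module `M`. -/
def tensorLeftSMul [Module B M] [IsScalarTower R B M] :
    A ⊗[R] B →ₗ[R] A ⊗[R] M →ₗ[R] A ⊗[R] M :=
  TensorProduct.map₂ (LinearMap.mul R A) (Algebra.lsmul R R M).toLinearMap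

/-- The action `(x ⊗ m) • (a ⊗ b) = x a ⊗ m b` of `A ⊗ B` on `A ⊗ M`, for a right `B`-module `M`.
The acting element is the first argument. -/
def tensorRightSMul [Module Bᵐᵒᵖ M] [IsScalarTower R Bᵐᵒᵖ M] :
    A ⊗[R] B →ₗ[R] A ⊗[R] M →ₗ[R] A ⊗[R] M :=
  TensorProduct.map₂ (LinearMap.mul R A).flip
    ((Algebra.lsmul (A := Bᵐᵒᵖ) R R M).toLinearMap ∘ₗ (opLinearEquiv R).toLinearMap)

variable {A B M}

@[simp]
lemma tensorLeftSMul_tmul_tmul [Module B M] [IsScalarTower R B M] (a x : A) (b : B) (m : M) :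
    tensorLeftSMul (R := R) A B M (a ⊗ₜ b) (x ⊗ₜ m) = (a * x) ⊗ₜ (b • m) := rfl

@[simp]
lemma tensorRightSMul_tmul_tmul [Module Bᵐᵒᵖ M] [IsScalarTower R Bᵐᵒᵖ M] (a x : A) (b : B)
    (m : M) : tensorRightSMul (R := R) A B M (a ⊗ₜ b) (x ⊗ₜ m) = (x * a) ⊗ₜ (op b • m) := rfl

lemma smul_tensorRightSMul [Module Bᵐᵒᵖ M] [IsScalarTower R Bᵐᵒᵖ M] (a : A) (Z : A ⊗[R] B)
    (X : A ⊗[R] M) : a • tensorRightSMul A B M Z X = tensorRightSMul A B M Z (a • X) := by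
  induction Z with
  | zero => simp only [map_zero, LinearMap.zero_apply, smul_zero]
  | add Y Z hY hZ => simp only [map_add, LinearMap.add_apply, smul_add, hY, hZ]
  | tmul x b =>
    induction X with
    | zero => simp only [map_zero, smul_zero]
    | add X Y hX hY => simp only [map_add, smul_add, hX, hY]
    | tmul y m => simp [smul_tmul', mul_assoc]

lemma apply_tensorLeftSMul [Module B M] [IsScalarTower R B M] {V : Type*} [AddCommGroup V]
    [Module R V] {f : A ⊗[R] M →ₗ[R] V} {χ : B →ₗ[R] R}
    (hf : ∀ a b m, f (a ⊗ₜ (b • m)) = χ b • f (a ⊗ₜ m)) (Z : A ⊗[R] B) (X : A ⊗[R] M) :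
    f (tensorLeftSMul A B M Z X) = f (slice A χ Z • X) := by
  induction Z with
  | zero => simp only [map_zero, LinearMap.zero_apply, zero_smul]
  | add Y Z hY hZ => simp only [map_add, LinearMap.add_apply, add_smul, hY, hZ]
  | tmul a b =>
    induction X with
    | zero => simp only [map_zero, smul_zero]
    | add X Y hX hY => simp only [map_add, smul_add, hX, hY]
    | tmul x m =>
      rw [tensorLeftSMul_tmul_tmul, hf, slice_tmul, smul_tmul', smul_assoc, smul_eq_mul,
        ← smul_tmul', map_smul]

lemma apply_tensorRightSMul [Module Bᵐᵒᵖ M] [IsScalarTower R Bᵐᵒᵖ M] {V : Type*}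
    [AddCommGroup V] [Module R V] {f : A ⊗[R] M →ₗ[R] V} {χ : B →ₗ[R] R}
    (hf : ∀ a b m, f (a ⊗ₜ (op b • m)) = χ b • f (a ⊗ₜ m)) (Z : A ⊗[R] B) (X : A ⊗[R] M) :
    f (tensorRightSMul A B M Z X) =
      f (LinearMap.rTensor M (LinearMap.mulRight R (slice A χ Z)) X) := by
  induction X with
  | zero => simp only [map_zero]
  | add X Y hX hY => simp only [map_add, hX, hY]
  | tmul x m =>
    induction Z with
    | zero => simp
    | add Y Z hY hZ =>
      simp only [map_add, LinearMap.add_apply, hY, hZ, LinearMap.rTensor_tmul,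
        LinearMap.mulRight_apply, mul_add, TensorProduct.add_tmul]
    | tmul a b =>
      rw [tensorRightSMul_tmul_tmul, hf, slice_tmul, LinearMap.rTensor_tmul,
        LinearMap.mulRight_apply, mul_smul_comm, ← smul_tmul', map_smul]

end TensorActions

section Shear

open Coalgebra HopfAlgebra

section FreeLift

variable {R : Type*} [CommRing R] {A : Type*} [Ring A] [Algebra R A] {M N : Type*}
  [AddCommGroup M] [Module R M] [AddCommGroup N] [Module R N] [Module A N] [IsScalarTower R A N]

variable (A) in
/-- The extension `a ⊗ m ↦ a • f m` of `f` to an `A`-linear map out of the free `A`-module on `M`,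
for a possibly noncommutative `R`-algebra `A`. -/
def freeLift (f : M →ₗ[R] N) : A ⊗[R] M →ₗ[A] N :=
  AlgebraTensorModule.lift (LinearMap.toSpanSingleton A (M →ₗ[R] N) f)

@[simp]
lemma freeLift_tmul (f : M →ₗ[R] N) (a : A) (m : M) : freeLift A f (a ⊗ₜ m) = a • f m := rfl

lemma tensor_hom_ext_one_tmul {f g : A ⊗[R] M →ₗ[A] N}
    (h : ∀ m, f (1 ⊗ₜ m) = g (1 ⊗ₜ m)) : f = g := by
  refine AlgebraTensorModule.ext fun a m => ?_
  rw [← mul_one a, ← smul_eq_mul, ← smul_tmul', map_smul, map_smul, h]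

end FreeLift

variable {A : Type} [Ring A] {M N : Type} [AddCommGroup M] [Module ℂ M]
  [AddCommGroup N] [Module ℂ N]

section Bialgebra

variable [Bialgebra ℂ A]

lemma freeLift_map_coaction (cM : Coaction A M) (f g : A →ₗ[ℂ] A) (X : A ⊗[ℂ] M) :
    freeLift A (LinearMap.rTensor M g ∘ₗ cM.ρ) (LinearMap.rTensor M f X) =
      LinearMap.rTensor M (LinearMap.mul' ℂ A ∘ₗ TensorProduct.map f g)
        ((TensorProduct.assoc ℂ A A M).symm (LinearMap.lTensor A cM.ρ X)) := by
  induction X with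
  | zero => simp only [map_zero]
  | add X Y hX hY => simp only [map_add, hX, hY]
  | tmul a m =>
    simp only [LinearMap.rTensor_tmul, LinearMap.lTensor_tmul, freeLift_tmul, LinearMap.comp_apply]
    induction cM.ρ m with
    | zero => simp only [map_zero, smul_zero, TensorProduct.tmul_zero]
    | add X Y hX hY => simp only [map_add, smul_add, TensorProduct.tmul_add, hX, hY]
    | tmul x n => rfl

lemma Coaction.rTensor_assoc_symm_of_comp_comul (cM : Coaction A M) {φ : A ⊗[ℂ] A →ₗ[ℂ] A}
    (hφ : φ ∘ₗ comul = Algebra.linearMap ℂ A ∘ₗ Coalgebra.counit) (m : M) :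
    LinearMap.rTensor M φ ((TensorProduct.assoc ℂ A A M).symm
      (LinearMap.lTensor A cM.ρ (cM.ρ m))) = 1 ⊗ₜ m := by
  have hcounit : LinearMap.rTensor M Coalgebra.counit (cM.ρ m) = (1 : ℂ) ⊗ₜ m :=
    (LinearEquiv.eq_symm_apply (TensorProduct.lid ℂ M)).2 (cM.counit m)
  rw [← cM.coassoc, ← LinearMap.rTensor_comp_apply, hφ, LinearMap.rTensor_comp_apply, hcounit,
    LinearMap.rTensor_tmul, Algebra.linearMap_apply, map_one]

/-- The codiagonal coaction `a ⊗ m ↦ a₁ m₋₁ ⊗ (a₂ ⊗ m₀)` on `A ⊗ M`. -/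
def Coaction.codiagonal (cM : Coaction A M) : A ⊗[ℂ] M →ₗ[ℂ] A ⊗[ℂ] (A ⊗[ℂ] M) :=
  TensorProduct.map (LinearMap.mul' ℂ A) LinearMap.id ∘ₗ
    (TensorProduct.tensorTensorTensorComm ℂ A A A M).toLinearMap ∘ₗ
    TensorProduct.map comul cM.ρ

lemma Coaction.cofree_smul (a : A) (X : A ⊗[ℂ] M) :
    (Coaction.cofree A M).ρ (a • X) =
      tensorLeftSMul A A (A ⊗[ℂ] M) (comul a) ((Coaction.cofree A M).ρ X) := by
  induction X with
  | zero => simp only [map_zero, smul_zero]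
  | add X Y hX hY => simp only [map_add, smul_add, hX, hY]
  | tmul x m =>
    simp only [smul_tmul', smul_eq_mul, Coaction.cofree, LinearMap.comp_apply, LinearEquiv.coe_coe,
      assoc_rTensor_comul_tmul, Bialgebra.comul_mul]
    induction comul (R := ℂ) a with
    | zero => simp only [zero_mul, map_zero, LinearMap.zero_apply]
    | add X Y hX hY => simp only [add_mul, map_add, LinearMap.add_apply, hX, hY]
    | tmul a₁ a₂ =>
      induction comul (R := ℂ) x with
      | zero => simp only [mul_zero, map_zero]
      | add X Y hX hY => simp only [mul_add, map_add, hX, hY]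
      | tmul x₁ x₂ => simp [smul_tmul']

end Bialgebra

section HopfAlgebra

variable [HopfAlgebra ℂ A]

/-- The `A`-linear bijection `a ⊗ m ↦ a m₋₁ ⊗ m₀` of `A ⊗ M`, with inverse
`a ⊗ m ↦ a S(m₋₁) ⊗ m₀`. -/
def Coaction.shear (cM : Coaction A M) : (A ⊗[ℂ] M) ≃ₗ[A] (A ⊗[ℂ] M) :=
  LinearEquiv.ofLinearMap (freeLift A cM.ρ) (freeLift A (LinearMap.rTensor M (antipode ℂ) ∘ₗ cM.ρ))
    (by
      refine tensor_hom_ext_one_tmul fun m => ?_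
      have h := freeLift_map_coaction cM (antipode ℂ) LinearMap.id (cM.ρ m)
      rw [LinearMap.rTensor_id, LinearMap.id_comp,
        cM.rTensor_assoc_symm_of_comp_comul mul_antipode_rTensor_comul] at h
      simpa only [LinearMap.comp_apply, freeLift_tmul, one_smul, LinearMap.id_apply] using h)
    (by
      refine tensor_hom_ext_one_tmul fun m => ?_
      have h := freeLift_map_coaction cM LinearMap.id (antipode ℂ) (cM.ρ m)
      rw [LinearMap.rTensor_id, LinearMap.id_apply,
        cM.rTensor_assoc_symm_of_comp_comul mul_antipode_lTensor_comul] at h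
      simpa only [LinearMap.comp_apply, freeLift_tmul, one_smul, LinearMap.id_apply] using h)

@[simp]
lemma Coaction.shear_tmul (cM : Coaction A M) (a : A) (m : M) :
    cM.shear (a ⊗ₜ m) = a • cM.ρ m := rfl

@[simp]
lemma Coaction.shear_symm_tmul (cM : Coaction A M) (a : A) (m : M) :
    cM.shear.symm (a ⊗ₜ m) = a • LinearMap.rTensor M (antipode ℂ) (cM.ρ m) := rfl

lemma Coaction.shear_symm_coaction (cM : Coaction A M) (m : M) :
    cM.shear.symm (cM.ρ m) = 1 ⊗ₜ m := by
  rw [LinearEquiv.symm_apply_eq, cM.shear_tmul, one_smul]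

lemma IsCovariant.lTensor_shear_symm {cM : Coaction A M} {cN : Coaction A N} {f : M →ₗ[ℂ] N}
    (hf : IsCovariant cM cN f) (X : A ⊗[ℂ] M) :
    LinearMap.lTensor A f (cM.shear.symm X) = cN.shear.symm (LinearMap.lTensor A f X) := by
  obtain ⟨Y, rfl⟩ := cM.shear.surjective X
  rw [LinearEquiv.symm_apply_apply, LinearEquiv.eq_symm_apply]
  induction Y with
  | zero => simp only [map_zero]
  | add X Y hX hY => simp only [map_add, hX, hY]
  | tmul a m =>
    rw [LinearMap.lTensor_tmul, Coaction.shear_tmul, Coaction.shear_tmul, hf m]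
    exact ((AlgebraTensorModule.lTensor A A f).map_smul a (cM.ρ m)).symm

lemma Coaction.cofree_shear (cM : Coaction A M) (X : A ⊗[ℂ] M) :
    (Coaction.cofree A M).ρ (cM.shear X) =
      LinearMap.lTensor A (cM.shear.toLinearMap.restrictScalars ℂ) (cM.codiagonal X) := by
  induction X with
  | zero => simp only [map_zero]
  | add X Y hX hY => simp only [map_add, hX, hY]
  | tmul a m =>
    rw [cM.shear_tmul, Coaction.cofree_smul, cM.isCovariant_cofree]
    simp only [Coaction.codiagonal, LinearMap.comp_apply, TensorProduct.map_tmul]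
    induction comul (R := ℂ) a with
    | zero => simp only [map_zero, LinearMap.zero_apply, TensorProduct.zero_tmul]
    | add X Y hX hY => simp only [map_add, LinearMap.add_apply, TensorProduct.add_tmul, hX, hY]
    | tmul a₁ a₂ =>
      induction cM.ρ m with
      | zero => simp only [map_zero, TensorProduct.tmul_zero]
      | add X Y hX hY => simp only [map_add, TensorProduct.tmul_add, hX, hY]
      | tmul x n => rfl

lemma Coaction.lTensor_shear_symm_cofree (cM : Coaction A M) (X : A ⊗[ℂ] M) :
    LinearMap.lTensor A (cM.shear.symm.toLinearMap.restrictScalars ℂ)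
      ((Coaction.cofree A M).ρ X) = cM.codiagonal (cM.shear.symm X) := by
  have hcancel : (cM.shear.symm.toLinearMap.restrictScalars ℂ) ∘ₗ
      (cM.shear.toLinearMap.restrictScalars ℂ) = LinearMap.id :=
    LinearMap.ext cM.shear.symm_apply_apply
  obtain ⟨Y, rfl⟩ := cM.shear.surjective X
  rw [cM.cofree_shear, LinearEquiv.symm_apply_apply, ← LinearMap.lTensor_comp_apply, hcancel,
    LinearMap.lTensor_id, LinearMap.id_apply]

end HopfAlgebra

end Shear

section Augmentation

variable {R : Type*} [CommRing R] {B : Type*} [Ring B] [Algebra R B] (χ : B →ₐ[R] R)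
  (M : Type*) [AddCommGroup M] [Module R M]

/-- The submodule `B⁺M` of a left `B`-module `M`, where `B⁺` is the kernel of `χ`. -/
def leftPlus [Module B M] : Submodule R M :=
  Submodule.span R {x | ∃ (b : B) (m : M), χ b = 0 ∧ x = b • m}

/-- The submodule `MB⁺` of a right `B`-module `M`, where `B⁺` is the kernel of `χ`. -/
def rightPlus [Module Bᵐᵒᵖ M] : Submodule R M :=
  Submodule.span R {x | ∃ (b : B) (m : M), χ b = 0 ∧ x = op b • m}

variable {χ M}

lemma smul_mem_leftPlus [Module B M] {b : B} (hb : χ b = 0) (m : M) : b • m ∈ leftPlus χ M :=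
  Submodule.subset_span ⟨b, m, hb, rfl⟩

lemma op_smul_mem_rightPlus [Module Bᵐᵒᵖ M] {b : B} (hb : χ b = 0) (m : M) :
    op b • m ∈ rightPlus χ M :=
  Submodule.subset_span ⟨b, m, hb, rfl⟩

lemma leftPlus_le [Module B M] {S : Submodule R M} (h : ∀ b m, χ b = 0 → b • m ∈ S) :
    leftPlus χ M ≤ S := by
  rw [leftPlus, Submodule.span_le]
  rintro _ ⟨b, m, hb, rfl⟩
  exact h b m hb

lemma rightPlus_le [Module Bᵐᵒᵖ M] {S : Submodule R M} (h : ∀ b m, χ b = 0 → op b • m ∈ S) :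
    rightPlus χ M ≤ S := by
  rw [rightPlus, Submodule.span_le]
  rintro _ ⟨b, m, hb, rfl⟩
  exact h b m hb

variable {N : Type*} [AddCommGroup N] [Module R N] {g : M →ₗ[R] N}

lemma map_smul_of_leftPlus_le_ker [Module B M] [IsScalarTower R B M]
    (hg : leftPlus χ M ≤ LinearMap.ker g) (b : B) (m : M) : g (b • m) = χ b • g m := by
  have hb : χ (b - algebraMap R B (χ b)) = 0 := by simp
  have h : g ((b - algebraMap R B (χ b)) • m) = 0 := hg (smul_mem_leftPlus hb m)
  rwa [sub_smul, algebraMap_smul, map_sub, g.map_smul, sub_eq_zero] at h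

lemma map_op_smul_of_rightPlus_le_ker [Module Bᵐᵒᵖ M] [IsScalarTower R Bᵐᵒᵖ M]
    (hg : rightPlus χ M ≤ LinearMap.ker g) (b : B) (m : M) : g (op b • m) = χ b • g m := by
  have hb : χ (b - algebraMap R B (χ b)) = 0 := by simp
  have h : g (op (b - algebraMap R B (χ b)) • m) = 0 := hg (op_smul_mem_rightPlus hb m)
  rwa [op_sub, sub_smul, ← MulOpposite.algebraMap_apply, algebraMap_smul, map_sub, g.map_smul,
    sub_eq_zero] at h

lemma rightPlus_le_leftPlus_of_surjective [Module B M] [Module Bᵐᵒᵖ M] [Module B N]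
    [Module Bᵐᵒᵖ N] (hM : rightPlus χ M ≤ leftPlus χ M) (hg_surj : Function.Surjective g)
    (hg_left : ∀ (b : B) m, g (b • m) = b • g m)
    (hg_right : ∀ (b : B) m, g (op b • m) = op b • g m) :
    rightPlus χ N ≤ leftPlus χ N := by
  have hg : leftPlus χ M ≤ (leftPlus χ N).comap g :=
    leftPlus_le fun b m hb => by
      rw [Submodule.mem_comap, hg_left]
      exact smul_mem_leftPlus hb (g m)
  refine rightPlus_le fun b n hb => ?_
  obtain ⟨m, rfl⟩ := hg_surj n
  rw [← hg_right]
  exact hg (hM (op_smul_mem_rightPlus hb m))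

end Augmentation

section CoinvariantAugmentation

variable {A B : Type} [Ring A] [Bialgebra ℂ A] [Ring B] [Algebra ℂ B]

/-- The character `b ↦ ε(ι b)` of a subalgebra `ι : B → A`, whose kernel is `B⁺ = B ∩ ker ε`. -/
def augmentation (ι : B →ₐ[ℂ] A) : B →ₐ[ℂ] ℂ :=
  (Bialgebra.counitAlgHom ℂ A).comp ι

lemma slice_augmentation_coaction {ι : B →ₐ[ℂ] A} {δB : Coaction A B}
    (hδB : IsCovariant δB (Coaction.regular A) ι.toLinearMap) (b : B) :
    slice A (augmentation ι).toLinearMap (δB.ρ b) = ι b := by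
  have hslice : (augmentation ι).toLinearMap = Coalgebra.counit ∘ₗ ι.toLinearMap := rfl
  rw [slice, hslice, LinearMap.comp_apply, LinearMap.lTensor_comp_apply, ← hδB b]
  exact (congrArg _ (Coalgebra.lTensor_counit_comul (ι b))).trans (one_smul ℂ (ι b))

end CoinvariantAugmentation

section RelHopfModule

variable {A B M : Type} [Ring B] [Algebra ℂ B] [AddCommGroup M] [Module ℂ M] [Module B M]
  [IsScalarTower ℂ B M] [Module Bᵐᵒᵖ M] [IsScalarTower ℂ Bᵐᵒᵖ M]

section

variable [Ring A] [Bialgebra ℂ A] {δB : Coaction A B} {cM : Coaction A M}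

lemma IsRelHopfModule.coaction_smul (h : IsRelHopfModule δB cM) (b : B) (m : M) :
    cM.ρ (b • m) = tensorLeftSMul A B M (δB.ρ b) (cM.ρ m) := by
  obtain ⟨n, a, c, hb⟩ := TensorProduct.exists_sum_tmul_eq (δB.ρ b)
  rw [h.1 b m n a c hb, hb, map_sum, LinearMap.sum_apply]
  rfl

lemma IsRelHopfModule.coaction_op_smul (h : IsRelHopfModule δB cM) (b : B) (m : M) :
    cM.ρ (op b • m) = tensorRightSMul A B M (δB.ρ b) (cM.ρ m) := by
  obtain ⟨n, a, c, hb⟩ := TensorProduct.exists_sum_tmul_eq (δB.ρ b)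
  rw [h.2 b m n a c hb, hb, map_sum, LinearMap.sum_apply]
  rfl

end

lemma IsRelHopfModule.shear_tensorRightSMul [Ring A] [HopfAlgebra ℂ A] {δB : Coaction A B}
    {cM : Coaction A M} (hM : IsRelHopfModule δB cM) (b : B) (X : A ⊗[ℂ] M) :
    cM.shear (tensorRightSMul A B M (1 ⊗ₜ b) X) =
      tensorRightSMul A B M (δB.ρ b) (cM.shear X) := by
  induction X with
  | zero => simp only [map_zero]
  | add X Y hX hY => simp only [map_add, hX, hY]
  | tmul a m =>
    rw [tensorRightSMul_tmul_tmul, mul_one, cM.shear_tmul, hM.coaction_op_smul,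
      smul_tensorRightSMul, cM.shear_tmul]

end RelHopfModule

section SMulVia

variable {R A B M N : Type*} [CommRing R] [AddCommGroup A] [Module R A] [Ring B] [Algebra R B]
  [AddCommGroup M] [Module R M] [Module B M] [IsScalarTower R B M]
  [AddCommGroup N] [Module R N] [Module B N] [IsScalarTower R B N]

variable (M) in
/-- The map `A ⊗ M → M`, `a ⊗ m ↦ E(a) m`, attached to a linear map `E : A → B`. -/
def smulVia (E : A →ₗ[R] B) : A ⊗[R] M →ₗ[R] M :=
  TensorProduct.lift ((Algebra.lsmul R R M).toLinearMap ∘ₗ E)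

@[simp]
lemma smulVia_tmul (E : A →ₗ[R] B) (a : A) (m : M) : smulVia M E (a ⊗ₜ m) = E a • m := rfl

lemma smulVia_lTensor (E : A →ₗ[R] B) {f : M →ₗ[R] N} (hf : ∀ (b : B) m, f (b • m) = b • f m)
    (X : A ⊗[R] M) : smulVia N E (LinearMap.lTensor A f X) = f (smulVia M E X) := by
  induction X with
  | zero => simp only [map_zero]
  | add X Y hX hY => simp only [map_add, hX, hY]
  | tmul a m => simp [hf]

end SMulVia

section ExpectationSMul

variable {A B M : Type} [Ring A] [Bialgebra ℂ A] [Ring B] [Algebra ℂ B]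
  [AddCommGroup M] [Module ℂ M] [Module B M] [IsScalarTower ℂ B M]
  {ι : B →ₐ[ℂ] A} {δB : Coaction A B} {cM : Coaction A M} {E : A →ₗ[ℂ] B}

namespace IsCovariantExpectation

lemma smulVia_smul (hE : IsCovariantExpectation ι δB E) (b : B) (X : A ⊗[ℂ] M) :
    smulVia M E (ι b • X) = b • smulVia M E X := by
  induction X with
  | zero => simp only [map_zero, smul_zero]
  | add X Y hX hY => simp only [map_add, smul_add, hX, hY]
  | tmul a m => simp [smul_tmul', hE.map_mul_left, mul_smul]

lemma coaction_smulVia [Module Bᵐᵒᵖ M] [IsScalarTower ℂ Bᵐᵒᵖ M]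
    (hE : IsCovariantExpectation ι δB E) (hM : IsRelHopfModule δB cM)
    (X : A ⊗[ℂ] M) :
    cM.ρ (smulVia M E X) = LinearMap.lTensor A (smulVia M E) (cM.codiagonal X) := by
  induction X with
  | zero => simp only [map_zero]
  | add X Y hX hY => simp only [map_add, hX, hY]
  | tmul a m =>
    rw [smulVia_tmul, hM.coaction_smul, hE.covariant]
    simp only [Coaction.regular, Coaction.codiagonal, LinearMap.comp_apply, TensorProduct.map_tmul]
    induction Coalgebra.comul (R := ℂ) a with
    | zero => simp only [map_zero, LinearMap.zero_apply, TensorProduct.zero_tmul]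
    | add X Y hX hY => simp only [map_add, LinearMap.add_apply, TensorProduct.add_tmul, hX, hY]
    | tmul a₁ a₂ =>
      induction cM.ρ m with
      | zero => simp only [map_zero, TensorProduct.tmul_zero]
      | add X Y hX hY => simp only [map_add, TensorProduct.tmul_add, hX, hY]
      | tmul x n => rfl

end IsCovariantExpectation

end ExpectationSMul

section Retraction

open HopfAlgebra

variable {A B M N : Type} [Ring A] [HopfAlgebra ℂ A] [Ring B] [Algebra ℂ B]
  [AddCommGroup M] [Module ℂ M] [Module B M] [IsScalarTower ℂ B M]
  [AddCommGroup N] [Module ℂ N] [Module B N] [IsScalarTower ℂ B N]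

/-- The map `A ⊗ M → M`, `a ⊗ m ↦ E(a S(m₋₁)) m₀`. For a covariant expectation `E` it is a
retraction of the coaction `M → A ⊗ M`. -/
def Coaction.retraction (cM : Coaction A M) (E : A →ₗ[ℂ] B) : A ⊗[ℂ] M →ₗ[ℂ] M :=
  smulVia M E ∘ₗ cM.shear.symm.toLinearMap.restrictScalars ℂ

lemma Coaction.retraction_apply (cM : Coaction A M) (E : A →ₗ[ℂ] B) (X : A ⊗[ℂ] M) :
    cM.retraction E X = smulVia M E (cM.shear.symm X) := rfl

lemma IsCovariant.retraction_lTensor {cM : Coaction A M} {cN : Coaction A N} {f : M →ₗ[ℂ] N}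
    (hf : IsCovariant cM cN f) (hf_left : ∀ (b : B) m, f (b • m) = b • f m) (E : A →ₗ[ℂ] B)
    (X : A ⊗[ℂ] M) : cN.retraction E (LinearMap.lTensor A f X) = f (cM.retraction E X) := by
  rw [Coaction.retraction_apply, ← hf.lTensor_shear_symm, smulVia_lTensor E hf_left,
    Coaction.retraction_apply]

variable {ι : B →ₐ[ℂ] A} {δB : Coaction A B} {cM : Coaction A M} {E : A →ₗ[ℂ] B}

namespace IsCovariantExpectation

lemma retraction_coaction (hE : IsCovariantExpectation ι δB E) (cM : Coaction A M) (m : M) :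
    cM.retraction E (cM.ρ m) = m := by
  rw [Coaction.retraction_apply, cM.shear_symm_coaction, smulVia_tmul, hE.map_one, one_smul]

lemma retraction_smul (hE : IsCovariantExpectation ι δB E) (cM : Coaction A M) (b : B)
    (X : A ⊗[ℂ] M) : cM.retraction E (ι b • X) = b • cM.retraction E X := by
  rw [Coaction.retraction_apply, map_smul, hE.smulVia_smul, Coaction.retraction_apply]

lemma smulVia_antipode_tensorLeftSMul (hE : IsCovariantExpectation ι δB E) (a : A)
    (Z : A ⊗[ℂ] B) (X : A ⊗[ℂ] M) :
    smulVia M E (a • LinearMap.rTensor M (antipode ℂ) (tensorLeftSMul A B M Z X)) =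
      smulVia M E (a • LinearMap.rTensor M (LinearMap.mulRight ℂ (LinearMap.mul' ℂ A
        (TensorProduct.map (antipode ℂ) ι.toLinearMap Z)) ∘ₗ antipode ℂ) X) := by
  induction X with
  | zero => simp only [map_zero]
  | add X Y hX hY => simp only [map_add, smul_add, hX, hY]
  | tmul y m =>
    induction Z with
    | zero => simp
    | add Y Z hY hZ =>
      rw [LinearMap.rTensor_tmul, LinearMap.comp_apply, LinearMap.mulRight_apply] at hY hZ ⊢
      simp only [map_add, LinearMap.add_apply, smul_add, mul_add, TensorProduct.add_tmul, hY, hZ]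
    | tmul x c =>
      simp [smul_tmul', antipode_mul_antidistrib, smul_smul, ← hE.map_mul_right, mul_assoc]

variable [Module Bᵐᵒᵖ M] [IsScalarTower ℂ Bᵐᵒᵖ M]

lemma isCovariant_retraction (hE : IsCovariantExpectation ι δB E)
    (hM : IsRelHopfModule δB cM) :
    IsCovariant (Coaction.cofree A M) cM (cM.retraction E) := fun X => by
  rw [Coaction.retraction_apply, hE.coaction_smulVia hM, ← cM.lTensor_shear_symm_cofree,
    ← LinearMap.lTensor_comp_apply, Coaction.retraction]

lemma retraction_tmul_smul (hE : IsCovariantExpectation ι δB E)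
    (hδB : IsCovariant δB (Coaction.regular A) ι.toLinearMap) (hM : IsRelHopfModule δB cM)
    (a : A) (b : B) (m : M) :
    cM.retraction E (a ⊗ₜ (b • m)) = augmentation ι b • cM.retraction E (a ⊗ₜ m) := by
  have hcancel : LinearMap.mul' ℂ A (TensorProduct.map (antipode ℂ) ι.toLinearMap (δB.ρ b)) =
      algebraMap ℂ A (augmentation ι b) := by
    rw [← LinearMap.rTensor_comp_lTensor, LinearMap.comp_apply, ← hδB b]
    exact mul_antipode_rTensor_comul_apply (ι b)
  have hscalar : LinearMap.mulRight ℂ (algebraMap ℂ A (augmentation ι b)) =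
      augmentation ι b • LinearMap.id :=
    LinearMap.ext fun x => by simp [← Algebra.commutes, ← Algebra.smul_def]
  rw [Coaction.retraction_apply, cM.shear_symm_tmul, hM.coaction_smul,
    hE.smulVia_antipode_tensorLeftSMul, hcancel, hscalar, LinearMap.smul_comp, LinearMap.id_comp,
    LinearMap.rTensor_smul, LinearMap.smul_apply, smul_comm, map_smul, Coaction.retraction_apply,
    cM.shear_symm_tmul]

lemma leftPlus_le_ker_retraction (hE : IsCovariantExpectation ι δB E)
    (hδB : IsCovariant δB (Coaction.regular A) ι.toLinearMap) (hM : IsRelHopfModule δB cM)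
    (a : A) : leftPlus (augmentation ι) M ≤
      LinearMap.ker (cM.retraction E ∘ₗ TensorProduct.mk ℂ A M a) :=
  leftPlus_le fun b m hb => by
    rw [LinearMap.mem_ker, LinearMap.comp_apply, TensorProduct.mk_apply,
      hE.retraction_tmul_smul hδB hM, hb, zero_smul]

end IsCovariantExpectation

lemma IsRelHopfModule.retraction_tensorRightSMul [Module Bᵐᵒᵖ M] [IsScalarTower ℂ Bᵐᵒᵖ M]
    [SMulCommClass B Bᵐᵒᵖ M] (hM : IsRelHopfModule δB cM) (E : A →ₗ[ℂ] B) (b : B)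
    (X : A ⊗[ℂ] M) :
    cM.retraction E (tensorRightSMul A B M (δB.ρ b) X) = op b • cM.retraction E X := by
  obtain ⟨Y, rfl⟩ := cM.shear.surjective X
  rw [← hM.shear_tensorRightSMul, Coaction.retraction_apply, Coaction.retraction_apply,
    LinearEquiv.symm_apply_apply, LinearEquiv.symm_apply_apply]
  induction Y with
  | zero => simp only [map_zero, smul_zero]
  | add X Y hX hY => simp only [map_add, smul_add, hX, hY]
  | tmul a m => simp [smul_comm]

lemma IsCovariantExpectation.retraction_mulRight [Module Bᵐᵒᵖ M] [IsScalarTower ℂ Bᵐᵒᵖ M]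
    [SMulCommClass B Bᵐᵒᵖ M] (hE : IsCovariantExpectation ι δB E)
    (hδB : IsCovariant δB (Coaction.regular A) ι.toLinearMap) (hM : IsRelHopfModule δB cM)
    (hplus : rightPlus (augmentation ι) M ≤ leftPlus (augmentation ι) M) (b : B)
    (X : A ⊗[ℂ] M) :
    cM.retraction E (LinearMap.rTensor M (LinearMap.mulRight ℂ (ι b)) X) =
      op b • cM.retraction E X := by
  rw [← hM.retraction_tensorRightSMul, ← slice_augmentation_coaction hδB]
  exact (apply_tensorRightSMul (fun a => map_op_smul_of_rightPlus_le_ker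
    (hplus.trans (hE.leftPlus_le_ker_retraction hδB hM a))) _ X).symm

end Retraction

section CovariantSection

lemma exists_linearMap_comp_sub_mem {K V W : Type*} [Field K] [AddCommGroup V] [Module K V]
    [AddCommGroup W] [Module K W] {f : V →ₗ[K] W} (hf : Function.Surjective f)
    (S : Submodule K W) : ∃ q : W →ₗ[K] V, S ≤ LinearMap.ker q ∧ ∀ w, f (q w) - w ∈ S := by
  obtain ⟨g, hg⟩ := (S.mkQ ∘ₗ f).exists_rightInverse_of_surjective
    (LinearMap.range_eq_top.2 (S.mkQ_surjective.comp hf))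
  refine ⟨g ∘ₗ S.mkQ, fun w hw => ?_, fun w => ?_⟩
  · rw [LinearMap.mem_ker, LinearMap.comp_apply, Submodule.mkQ_apply,
      (Submodule.Quotient.mk_eq_zero S).2 hw, map_zero]
  · exact (Submodule.Quotient.eq S).1 (LinearMap.congr_fun hg (S.mkQ w))

variable {A B M N : Type} [Ring A] [HopfAlgebra ℂ A] [Ring B] [Algebra ℂ B]
  [AddCommGroup M] [Module ℂ M] [Module B M] [IsScalarTower ℂ B M]
  [AddCommGroup N] [Module ℂ N]

/-- The average `n ↦ r(n₋₁ ⊗ q(n₀))` of a linear map `q : N → M` between comodules, where `r` is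
the retraction `A ⊗ M → M` given by an expectation `E`. -/
def covariantAverage (cN : Coaction A N) (cM : Coaction A M) (E : A →ₗ[ℂ] B) (q : N →ₗ[ℂ] M) :
    N →ₗ[ℂ] M :=
  cM.retraction E ∘ₗ LinearMap.lTensor A q ∘ₗ cN.ρ

variable {ι : B →ₐ[ℂ] A} {δB : Coaction A B} {cM : Coaction A M} {cN : Coaction A N}
  {E : A →ₗ[ℂ] B} {q : N →ₗ[ℂ] M}

namespace IsCovariantExpectation

lemma isCovariant_covariantAverage [Module Bᵐᵒᵖ M] [IsScalarTower ℂ Bᵐᵒᵖ M]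
    (hE : IsCovariantExpectation ι δB E) (hM : IsRelHopfModule δB cM) :
    IsCovariant cN cM (covariantAverage cN cM E q) :=
  (hE.isCovariant_retraction hM).comp ((isCovariant_lTensor_cofree q).comp cN.isCovariant_cofree)

variable [Module B N] [IsScalarTower ℂ B N] [Module Bᵐᵒᵖ N] [IsScalarTower ℂ Bᵐᵒᵖ N]

lemma covariantAverage_smul (hE : IsCovariantExpectation ι δB E)
    (hδB : IsCovariant δB (Coaction.regular A) ι.toLinearMap) (hN : IsRelHopfModule δB cN)
    (hq : leftPlus (augmentation ι) N ≤ LinearMap.ker q) (b : B) (n : N) :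
    covariantAverage cN cM E q (b • n) = b • covariantAverage cN cM E q n := by
  have hlTensor (a : A) (b : B) (n : N) : LinearMap.lTensor A q (a ⊗ₜ (b • n)) =
      augmentation ι b • LinearMap.lTensor A q (a ⊗ₜ n) := by
    rw [LinearMap.lTensor_tmul, map_smul_of_leftPlus_le_ker hq, TensorProduct.tmul_smul,
      LinearMap.lTensor_tmul]
  simp only [covariantAverage, LinearMap.comp_apply]
  rw [hN.coaction_smul, apply_tensorLeftSMul (χ := (augmentation ι).toLinearMap) hlTensor,
    slice_augmentation_coaction hδB, ← hE.retraction_smul]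
  exact congrArg _ ((AlgebraTensorModule.lTensor A A q).map_smul (ι b) (cN.ρ n))

lemma covariantAverage_op_smul [Module Bᵐᵒᵖ M] [IsScalarTower ℂ Bᵐᵒᵖ M] [SMulCommClass B Bᵐᵒᵖ M]
    (hE : IsCovariantExpectation ι δB E)
    (hδB : IsCovariant δB (Coaction.regular A) ι.toLinearMap) (hM : IsRelHopfModule δB cM)
    (hN : IsRelHopfModule δB cN)
    (hplus : rightPlus (augmentation ι) M ≤ leftPlus (augmentation ι) M)
    (hq : rightPlus (augmentation ι) N ≤ LinearMap.ker q) (b : B) (n : N) :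
    covariantAverage cN cM E q (op b • n) = op b • covariantAverage cN cM E q n := by
  have hlTensor (a : A) (b : B) (n : N) : LinearMap.lTensor A q (a ⊗ₜ (op b • n)) =
      augmentation ι b • LinearMap.lTensor A q (a ⊗ₜ n) := by
    rw [LinearMap.lTensor_tmul, map_op_smul_of_rightPlus_le_ker hq, TensorProduct.tmul_smul,
      LinearMap.lTensor_tmul]
  simp only [covariantAverage, LinearMap.comp_apply]
  rw [hN.coaction_op_smul, apply_tensorRightSMul (χ := (augmentation ι).toLinearMap) hlTensor,
    slice_augmentation_coaction hδB, ← hE.retraction_mulRight hδB hM hplus,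
    ← LinearMap.comp_apply (LinearMap.lTensor A q), LinearMap.lTensor_comp_rTensor,
    ← LinearMap.rTensor_comp_lTensor, LinearMap.comp_apply]

lemma map_covariantAverage [Module Bᵐᵒᵖ M] {f : M →ₗ[ℂ] N} (hE : IsCovariantExpectation ι δB E)
    (hδB : IsCovariant δB (Coaction.regular A) ι.toLinearMap) (hN : IsRelHopfModule δB cN)
    (hf : IsBimoduleMap (B := B) f) (hf_cov : IsCovariant cM cN f)
    (hfq : ∀ n, f (q n) - n ∈ leftPlus (augmentation ι) N) (n : N) :
    f (covariantAverage cN cM E q n) = n := by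
  have hretract (X : A ⊗[ℂ] N) :
      cN.retraction E (LinearMap.lTensor A (f ∘ₗ q) X) = cN.retraction E X := by
    induction X with
    | zero => simp only [map_zero]
    | add X Y hX hY => simp only [map_add, hX, hY]
    | tmul a n =>
      rw [LinearMap.lTensor_tmul, LinearMap.comp_apply, ← sub_eq_zero, ← map_sub,
        ← TensorProduct.tmul_sub]
      exact hE.leftPlus_le_ker_retraction hδB hN a (hfq n)
  simp only [covariantAverage, LinearMap.comp_apply]
  rw [← hf_cov.retraction_lTensor hf.1, ← LinearMap.lTensor_comp_apply, hretract,
    hE.retraction_coaction]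

theorem exists_section [Module Bᵐᵒᵖ M] [IsScalarTower ℂ Bᵐᵒᵖ M] [SMulCommClass B Bᵐᵒᵖ M]
    {f : M →ₗ[ℂ] N} (hE : IsCovariantExpectation ι δB E)
    (hδB : IsCovariant δB (Coaction.regular A) ι.toLinearMap) (hM : IsRelHopfModule δB cM)
    (hN : IsRelHopfModule δB cN)
    (hplus : rightPlus (augmentation ι) M ≤ leftPlus (augmentation ι) M)
    (hf : IsBimoduleMap (B := B) f) (hf_cov : IsCovariant cM cN f)
    (hf_surj : Function.Surjective f) :
    ∃ s : N →ₗ[ℂ] M, IsBimoduleMap (B := B) s ∧ IsCovariant cN cM s ∧ ∀ n, f (s n) = n := by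
  have hplusN : rightPlus (augmentation ι) N ≤ leftPlus (augmentation ι) N :=
    rightPlus_le_leftPlus_of_surjective hplus hf_surj hf.1 hf.2
  obtain ⟨q, hq, hfq⟩ := exists_linearMap_comp_sub_mem hf_surj (leftPlus (augmentation ι) N)
  exact ⟨covariantAverage cN cM E q,
    ⟨hE.covariantAverage_smul hδB hN hq,
      hE.covariantAverage_op_smul hδB hM hN hplus (hplusN.trans hq)⟩,
    hE.isCovariant_covariantAverage hM, hE.map_covariantAverage hδB hN hf hf_cov hfq⟩

end IsCovariantExpectation

end CovariantSection

section Calculi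

variable {B Ω V : Type} [Ring B] [Algebra ℂ B] [AddCommGroup Ω] [Module ℂ Ω] [Module B Ω]
  [Module Bᵐᵒᵖ Ω] [AddCommGroup V] [Module ℂ V]

lemma FODC.hom_ext (D : FODC B Ω) {f g : Ω →ₗ[ℂ] V}
    (h : ∀ a b : B, f (a • D.d b) = g (a • D.d b)) : f = g :=
  LinearMap.ext_on D.generates (by rintro _ ⟨a, b, rfl⟩; exact h a b)

lemma FODC.map_algebraMap (D : FODC B Ω) (c : ℂ) : D.d (algebraMap ℂ B c) = 0 := by
  have h := D.leibniz 1 1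
  rw [mul_one, op_one, one_smul, one_smul, left_eq_add] at h
  rw [Algebra.algebraMap_eq_smul_one, map_smul, h, smul_zero]

lemma FODC.isScalarTower [SMulCommClass B ℂ Ω] (D : FODC B Ω) : IsScalarTower ℂ B Ω := by
  suffices h : ∀ c : ℂ,
      DistribSMul.toLinearMap ℂ Ω (algebraMap ℂ B c) = c • LinearMap.id from
    .of_algebraMap_smul fun c => LinearMap.congr_fun (h c)
  refine fun c => D.hom_ext fun a b => ?_
  have h := D.leibniz (algebraMap ℂ B c) b
  rw [D.map_algebraMap, smul_zero, add_zero, ← Algebra.smul_def, map_smul] at h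
  change algebraMap ℂ B c • a • D.d b = c • a • D.d b
  rw [← mul_smul, Algebra.commutes, mul_smul, ← h, smul_comm]

variable [SMulCommClass Bᵐᵒᵖ ℂ Ω]

lemma FODC.smulCommClass [SMulCommClass B ℂ Ω] (D : FODC B Ω) : SMulCommClass B Bᵐᵒᵖ Ω where
  smul_comm a := MulOpposite.rec' fun c => by
    have h_comm (a b : B) : a • op c • D.d b = op c • a • D.d b := by
      have h := congrArg D.d (mul_assoc a b c)
      simp only [D.leibniz, op_mul, mul_smul, smul_add, ← add_assoc, add_left_inj,
        add_right_inj] at h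
      exact h.symm
    suffices h : DistribSMul.toLinearMap ℂ Ω a ∘ₗ DistribSMul.toLinearMap ℂ Ω (op c) =
        DistribSMul.toLinearMap ℂ Ω (op c) ∘ₗ DistribSMul.toLinearMap ℂ Ω a from
      LinearMap.congr_fun h
    refine D.hom_ext fun a' b => ?_
    change a • op c • a' • D.d b = op c • a • a' • D.d b
    rw [← h_comm, ← mul_smul, h_comm, mul_smul]

lemma FODC.isScalarTower_op [SMulCommClass B ℂ Ω] (D : FODC B Ω) : IsScalarTower ℂ Bᵐᵒᵖ Ω := by
  have := D.smulCommClass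
  suffices h : ∀ c : ℂ,
      DistribSMul.toLinearMap ℂ Ω (algebraMap ℂ Bᵐᵒᵖ c) = c • LinearMap.id from
    .of_algebraMap_smul fun c => LinearMap.congr_fun (h c)
  refine fun c => D.hom_ext fun a b => ?_
  have h := D.leibniz b (algebraMap ℂ B c)
  rw [D.map_algebraMap, smul_zero, zero_add, ← Algebra.commutes, ← Algebra.smul_def,
    map_smul] at h
  change algebraMap ℂ Bᵐᵒᵖ c • a • D.d b = c • a • D.d b
  rw [MulOpposite.algebraMap_apply, ← smul_comm, ← h, smul_comm]

end Calculi

section BalancedTensor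

variable {B M N T V : Type} [Ring B] [Algebra ℂ B]
  [AddCommGroup M] [Module ℂ M] [Module B M] [Module Bᵐᵒᵖ M]
  [AddCommGroup N] [Module ℂ N] [Module B N] [Module Bᵐᵒᵖ N]
  [AddCommGroup T] [Module ℂ T] [Module B T] [Module Bᵐᵒᵖ T] [AddCommGroup V] [Module ℂ V]

lemma BalPair.hom_ext (P : BalPair B M N T) {f g : T →ₗ[ℂ] V}
    (h : ∀ m n, f (P.tp m n) = g (P.tp m n)) : f = g :=
  LinearMap.ext_on P.tp_span (by rintro _ ⟨m, n, rfl⟩; exact h m n)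

lemma BalPair.smulCommClass [SMulCommClass B ℂ T] [SMulCommClass Bᵐᵒᵖ ℂ T]
    (P : BalPair B M N T) : SMulCommClass B Bᵐᵒᵖ T where
  smul_comm a := MulOpposite.rec' fun c => by
    suffices h : DistribSMul.toLinearMap ℂ T a ∘ₗ DistribSMul.toLinearMap ℂ T (op c) =
        DistribSMul.toLinearMap ℂ T (op c) ∘ₗ DistribSMul.toLinearMap ℂ T a from
      LinearMap.congr_fun h
    refine P.hom_ext fun m n => ?_
    change a • op c • P.tp m n = op c • a • P.tp m n
    rw [← P.tp_right, ← P.tp_left, ← P.tp_left, P.tp_right]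

lemma BalPair.isScalarTower [IsScalarTower ℂ B M] [SMulCommClass B ℂ T]
    (P : BalPair B M N T) : IsScalarTower ℂ B T := by
  suffices h : ∀ c : ℂ,
      DistribSMul.toLinearMap ℂ T (algebraMap ℂ B c) = c • LinearMap.id from
    .of_algebraMap_smul fun c => LinearMap.congr_fun (h c)
  refine fun c => P.hom_ext fun m n => ?_
  change algebraMap ℂ B c • P.tp m n = c • P.tp m n
  rw [← P.tp_left, algebraMap_smul, LinearMap.map_smul, LinearMap.smul_apply]

lemma BalPair.isScalarTower_op [IsScalarTower ℂ Bᵐᵒᵖ N] [SMulCommClass Bᵐᵒᵖ ℂ T]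
    (P : BalPair B M N T) : IsScalarTower ℂ Bᵐᵒᵖ T := by
  suffices h : ∀ c : ℂ,
      DistribSMul.toLinearMap ℂ T (algebraMap ℂ Bᵐᵒᵖ c) = c • LinearMap.id from
    .of_algebraMap_smul fun c => LinearMap.congr_fun (h c)
  refine fun c => P.hom_ext fun m n => ?_
  change algebraMap ℂ Bᵐᵒᵖ c • P.tp m n = c • P.tp m n
  rw [MulOpposite.algebraMap_apply, ← P.tp_right, ← MulOpposite.algebraMap_apply,
    algebraMap_smul, LinearMap.map_smul]

lemma BalPair.rightPlus_le_leftPlus [SMulCommClass Bᵐᵒᵖ ℂ T] (P : BalPair B M N T)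
    {χ : B →ₐ[ℂ] ℂ} (hM : rightPlus χ M ≤ leftPlus χ M) (hN : rightPlus χ N ≤ leftPlus χ N) :
    rightPlus χ T ≤ leftPlus χ T := by
  have h_left (n : N) : leftPlus χ M ≤ (leftPlus χ T).comap (P.tp.flip n) :=
    leftPlus_le fun b m hb => by
      rw [Submodule.mem_comap, LinearMap.flip_apply, P.tp_left]
      exact smul_mem_leftPlus hb _
  have h_right (m : M) : leftPlus χ N ≤ (leftPlus χ T).comap (P.tp m) :=
    leftPlus_le fun b n hb => by
      rw [Submodule.mem_comap, ← P.tp_mid]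
      exact h_left n (hM (op_smul_mem_rightPlus hb m))
  refine rightPlus_le fun b t hb => ?_
  suffices h : (leftPlus χ T).mkQ ∘ₗ DistribSMul.toLinearMap ℂ T (op b) = 0 from
    (Submodule.Quotient.mk_eq_zero _).1 (LinearMap.congr_fun h t)
  refine P.hom_ext fun m n => (Submodule.Quotient.mk_eq_zero _).2 ?_
  rw [DistribSMul.toLinearMap_apply, ← P.tp_right]
  exact h_right m (hN (op_smul_mem_rightPlus hb n))

lemma IsBimoduleMap.isScalarTower [IsScalarTower ℂ B M] {f : M →ₗ[ℂ] N}
    (hf : IsBimoduleMap (B := B) f) (hf_surj : Function.Surjective f) : IsScalarTower ℂ B N := by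
  refine .of_algebraMap_smul fun c n => ?_
  obtain ⟨m, rfl⟩ := hf_surj n
  rw [← hf.1, algebraMap_smul, LinearMap.map_smul]

lemma IsBimoduleMap.isScalarTower_op [IsScalarTower ℂ Bᵐᵒᵖ M] {f : M →ₗ[ℂ] N}
    (hf : IsBimoduleMap (B := B) f) (hf_surj : Function.Surjective f) :
    IsScalarTower ℂ Bᵐᵒᵖ N := by
  refine .of_algebraMap_smul fun c n => ?_
  obtain ⟨m, rfl⟩ := hf_surj n
  rw [MulOpposite.algebraMap_apply, ← hf.2, ← MulOpposite.algebraMap_apply, algebraMap_smul,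
    LinearMap.map_smul]

end BalancedTensor

theorem statement13_general {A : Type} [Ring A] [HopfAlgebra ℂ A] {H : Type*} [Ring H]
    [Bialgebra ℂ H] {π : A →ₐc[ℂ] H} {B : Type} [Ring B] [Algebra ℂ B] {ι : B →ₐ[ℂ] A}
    (hι : Function.Injective ι) (hcoinv : ∀ a, a ∈ Set.range ι ↔ rightCoaction π a = a ⊗ₜ 1)
    {h : H →ₗ[ℂ] ℂ} (h_one : h 1 = 1) (h_inv : ∀ x, slice H h (Coalgebra.comul x) = h x • 1)
    {δB : Coaction A B} (hδB : IsCovariant δB (Coaction.regular A) ι.toLinearMap)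
    {Ω T Ω2 : Type} [AddCommGroup Ω] [Module ℂ Ω] [Module B Ω] [Module Bᵐᵒᵖ Ω]
    [SMulCommClass B ℂ Ω] [SMulCommClass Bᵐᵒᵖ ℂ Ω]
    [AddCommGroup T] [Module ℂ T] [Module B T] [Module Bᵐᵒᵖ T]
    [SMulCommClass B ℂ T] [SMulCommClass Bᵐᵒᵖ ℂ T]
    [AddCommGroup Ω2] [Module ℂ Ω2] [Module B Ω2] [Module Bᵐᵒᵖ Ω2]
    [SMulCommClass B ℂ Ω2] [SMulCommClass Bᵐᵒᵖ ℂ Ω2]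
    (P : BalPair B Ω Ω T) (D : FODC B Ω)
    {wedge : T →ₗ[ℂ] Ω2} (hwedge : IsBimoduleMap (B := B) wedge)
    (hwedge_surj : Function.Surjective wedge) {cT : Coaction A T} {cΩ2 : Coaction A Ω2}
    (hT : IsRelHopfModule δB cT) (hΩ2 : IsRelHopfModule δB cΩ2)
    (hwedge_cov : IsCovariant cT cΩ2 wedge)
    (hplus : rightPlus (augmentation ι) Ω ≤ leftPlus (augmentation ι) Ω) :
    ∃ s : Ω2 →ₗ[ℂ] T, IsBimoduleMap (B := B) s ∧ IsCovariant cΩ2 cT s ∧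
      ∀ x, wedge (s x) = x := by
  have := D.isScalarTower
  have := D.isScalarTower_op
  have := P.smulCommClass
  have := P.isScalarTower
  have := P.isScalarTower_op
  have := hwedge.isScalarTower hwedge_surj
  have := hwedge.isScalarTower_op hwedge_surj
  obtain ⟨E, hE⟩ := exists_isCovariantExpectation hι hcoinv hδB h_one h_inv
  exact hE.exists_section hδB hT hΩ2 (P.rightPlus_le_leftPlus hplus hplus) hwedge hwedge_cov
    hwedge_surj

/-! ## STATEMENT 13 -/

/-- covariant quasi-tameness over quantum homogeneous spaces.
Let `π : A → H` be a surjective map of Hopf algebras, `B = A^{co(H)}` the coinvariant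
subalgebra, a quantum homogeneous space (`A` is faithfully flat as a right `B`-module),
and let `H` be cosemisimple.  If `(Ω•, ∧, d)` is an `A`-covariant differential calculus
on `B` such that each `Ω^k` belongs to `^A_0Mod_B`, then the calculus is covariantly
quasi-tame: there is an `A`-covariant `B`-bimodule map `s : Ω² → Ω¹ ⊗_B Ω¹` with
`∧ ∘ s = id`. -/
theorem statement13
    -- Hopf algebras A and H, with a surjective Hopf algebra map π : A → H
    {A : Type} [Ring A] [HopfAlgebra ℂ A]
    {H : Type} [Ring H] [HopfAlgebra ℂ H]
    (π : BialgHom ℂ A H) (hπ_surj : Function.Surjective π)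
    -- B = A^{co(H)}, the coinvariant subalgebra
    {B : Type} [Ring B] [Algebra ℂ B]
    (ι : B →ₐ[ℂ] A) (hι : Function.Injective ι)
    (hcoinv : ∀ a : A, a ∈ Set.range ι ↔
      (LinearMap.lTensor A π.toLinearMap) (Coalgebra.comul (R := ℂ) a) = a ⊗ₜ (1 : H))
    -- A as a right B-module, via right multiplication through ι
    [Module Bᵐᵒᵖ A] (hAmod : ∀ (b : B) (a : A), op b • a = a * ι b)
    -- B is a quantum homogeneous space: A is faithfully flat as a right B-module
    (hff : RightFaithfullyFlat B A)
    -- H is cosemisimple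
    (hcosemi : IsCosemisimple H)
    -- the coaction of A on B (the restriction of the coproduct of A)
    (δB : Coaction A B) (hδB_alg : IsComoduleAlgebra δB)
    (hδB_comul : ∀ b : B,
      (TensorProduct.map LinearMap.id ι.toLinearMap) (δB.ρ b) = Coalgebra.comul (R := ℂ) (ι b))
    -- the A-covariant differential calculus on B (degrees 1 and 2)
    {Ω T Ω2 : Type} [AddCommGroup Ω] [Module ℂ Ω] [Module B Ω] [Module Bᵐᵒᵖ Ω]
    [SMulCommClass B ℂ Ω] [SMulCommClass Bᵐᵒᵖ ℂ Ω]
    [AddCommGroup T] [Module ℂ T] [Module B T] [Module Bᵐᵒᵖ T]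
    [SMulCommClass B ℂ T] [SMulCommClass Bᵐᵒᵖ ℂ T]
    [AddCommGroup Ω2] [Module ℂ Ω2] [Module B Ω2] [Module Bᵐᵒᵖ Ω2]
    [SMulCommClass B ℂ Ω2] [SMulCommClass Bᵐᵒᵖ ℂ Ω2]
    (P : BalPair B Ω Ω T) (D : FODC B Ω)
    (wedge : T →ₗ[ℂ] Ω2) (hwedge : IsBimoduleMap (B := B) wedge)
    (hwedge_surj : Function.Surjective wedge)
    (d₁ : Ω →ₗ[ℂ] Ω2)
    (hd₁ : ∀ a b : B, d₁ (a • D.d b) = wedge (P.tp (D.d a) (D.d b)))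
    -- the coactions making the calculus A-covariant
    (cΩ : Coaction A Ω) (cT : Coaction A T) (cΩ2 : Coaction A Ω2)
    (hΩrel : IsRelHopfModule δB cΩ) (hTrel : IsRelHopfModule δB cT)
    (hΩ2rel : IsRelHopfModule δB cΩ2)
    (hd_cov : ∀ b : B, cΩ.ρ (D.d b) = (LinearMap.lTensor A D.d) (δB.ρ b))
    (hwedge_cov : IsCovariant cT cΩ2 wedge)
    (hd₁_cov : IsCovariant cΩ cΩ2 d₁)
    (htp_cov : ∀ (ω η : Ω) (n m : ℕ) (a : Fin n → A) (ω' : Fin n → Ω)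
      (c : Fin m → A) (η' : Fin m → Ω),
      cΩ.ρ ω = ∑ i, a i ⊗ₜ ω' i → cΩ.ρ η = ∑ j, c j ⊗ₜ η' j →
      cT.ρ (P.tp ω η) = ∑ i, ∑ j, (a i * c j) ⊗ₜ P.tp (ω' i) (η' j))
    -- Ω¹ and Ω² are objects of ^A_0Mod_B
    [Module.Finite B Ω] [Module.Finite B Ω2]
    (hΩplus : Submodule.span ℂ {x : Ω | ∃ (b : B) (m : Ω),
        Coalgebra.counit (R := ℂ) (ι b) = 0 ∧ x = op b • m} =
      Submodule.span ℂ {x : Ω | ∃ (b : B) (m : Ω),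
        Coalgebra.counit (R := ℂ) (ι b) = 0 ∧ x = b • m})
    (hΩ2plus : Submodule.span ℂ {x : Ω2 | ∃ (b : B) (m : Ω2),
        Coalgebra.counit (R := ℂ) (ι b) = 0 ∧ x = op b • m} =
      Submodule.span ℂ {x : Ω2 | ∃ (b : B) (m : Ω2),
        Coalgebra.counit (R := ℂ) (ι b) = 0 ∧ x = b • m}) :
    -- conclusion: the calculus is covariantly quasi-tame
    ∃ s : Ω2 →ₗ[ℂ] T, IsBimoduleMap (B := B) s ∧ IsCovariant cΩ2 cT s ∧
      ∀ x : Ω2, wedge (s x) = x := by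
  obtain ⟨h, h_one, h_inv, -⟩ := hcosemi
  exact statement13_general hι hcoinv h_one h_inv (fun b => (hδB_comul b).symm) P D hwedge
    hwedge_surj hTrel hΩ2rel hwedge_cov hΩplus.le

end
end
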